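/- arXiv:1507.08418 — 4 statements merged into one kernel-verified Lean document; each statement's English description precedes it below -/
import Mathlib

section
/- Let A and C be symmetric linear operators in a real or complex Hilbert space H with common domain 𝒟. Assume that A is C-bounded, that C is A-bounded, and that there exists γ > 0 such that ‖(A−C) x‖² ≤ ‖A x‖² + ‖C x‖² + γ‖x‖² for all x ∈ 𝒟. Then A is selfadjoint if and only if C is selfadjoint, and A is essentially selfadjoint if and only if C is essentially selfadjoint. -/
/-!
Write `P_T (x, y) = (T x - l y, T y + l x)` on `D × D ⊆ H × H` for `l > 0`; over `ℂ` this is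
`T + i l` in real form, and the doubling makes it available over `ℝ` as well. For a symmetric
densely defined `T`, the graph of the adjoint is the closure of the graph of `T` exactly when `P_T`
has dense range (`isEssSelfAdjointOp_iff_orthogonal_range`), and selfadjointness is essential
selfadjointness together with closedness.

The hypothesis on `A - C` says `-γ / 2 * ‖x‖² ≤ re ⟪A x, C x⟫`. By symmetry the cross terms cancel
in `re ⟪P_A u, P_C u⟫ = re ⟪A u, C u⟫ + l² ‖u‖²`, which is therefore nonnegative for large `l`,
while mutual relative boundedness makes `‖P_A u‖` and `‖P_C u‖` equivalent. Hence `P_A u ↦ P_C u`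
is a bicontinuous accretive map, and the adjoint of an accretive operator has the same
kernel as the operator, so density of range passes from `P_A` to `P_C`
(`orthogonal_range_eq_bot_of_accretive`). Closedness passes from `A` to `C` because
the graph norms are equivalent (`isClosed_of_relBounded`).
-/

open LinearPMap

/-- A partially defined operator `A` in a Hilbert space is symmetric if
`⟪A x, y⟫ = ⟪x, A y⟫` for all `x, y` in its domain. -/
def LinearPMap.IsSymmetricOp {𝕜 H : Type*} [RCLike 𝕜] [NormedAddCommGroup H]
    [InnerProductSpace 𝕜 H] (A : H →ₗ.[𝕜] H) : Prop :=
  ∀ x y : A.domain, inner (𝕜 := 𝕜) (A x) (y : H) = inner (𝕜 := 𝕜) (x : H) (A y)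

/-- A partially defined operator `A` in a Hilbert space is selfadjoint if it is densely
defined and `A* = A`. -/
def LinearPMap.IsSelfAdjointOp {𝕜 H : Type*} [RCLike 𝕜] [NormedAddCommGroup H]
    [InnerProductSpace 𝕜 H] [CompleteSpace H] (A : H →ₗ.[𝕜] H) : Prop :=
  Dense (A.domain : Set H) ∧ A.adjoint = A

/-- An operator `A` in a Hilbert space is essentially selfadjoint if it is closable and its
closure is a densely defined selfadjoint operator. -/
def LinearPMap.IsEssSelfAdjointOp {𝕜 H : Type*} [RCLike 𝕜] [NormedAddCommGroup H]
    [InnerProductSpace 𝕜 H] [CompleteSpace H] (A : H →ₗ.[𝕜] H) : Prop :=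
  A.IsClosable ∧ Dense (A.closure.domain : Set H) ∧ A.closure.adjoint = A.closure

/-! ### Density of range under accretivity -/

open Filter Topology in
/-- If `P` has dense range, `‖P u‖` and `‖Q u‖` are equivalent and `re ⟪P u, Q u⟫ ≥ 0`, then `Q` has
dense range. For `y` orthogonal to the range of `Q`, write `y = lim P uₙ` and `w = lim Q uₙ`;
positivity at `uₙ + t z` gives `t re ⟪P z, w⟫ + t² re ⟪P z, Q z⟫ ≥ 0` for all real `t`, so `w` is
orthogonal to the range of `P`. Thus `w = 0` and `y = 0`. -/
theorem orthogonal_range_eq_bot_of_accretive {𝕜 V K : Type*} [RCLike 𝕜] [AddCommGroup V]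
    [Module 𝕜 V] [NormedAddCommGroup K] [InnerProductSpace 𝕜 K] [CompleteSpace K]
    (P Q : V →ₗ[𝕜] K) (M N : ℝ) (hPQ : ∀ u, ‖P u‖ ≤ M * ‖Q u‖) (hQP : ∀ u, ‖Q u‖ ≤ N * ‖P u‖)
    (hpos : ∀ u, 0 ≤ RCLike.re (inner 𝕜 (P u) (Q u))) (hP : (LinearMap.range P)ᗮ = ⊥) :
    (LinearMap.range Q)ᗮ = ⊥ := by
  rw [Submodule.eq_bot_iff]
  intro y hy
  have hyQ : ∀ z, inner 𝕜 y (Q z) = 0 := fun z =>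
    (Submodule.mem_orthogonal' _ _).1 hy _ ⟨z, rfl⟩
  have hyP : y ∈ closure (LinearMap.range P : Set K) := by
    have := Submodule.topologicalClosure_eq_top_iff.2 hP
    rw [← Submodule.topologicalClosure_coe, this]; trivial
  obtain ⟨p, hp, hpy⟩ := mem_closure_iff_seq_limit.1 hyP
  choose u hu using hp
  have hu' : Tendsto (fun n => P (u n)) atTop (𝓝 y) := by simpa only [hu] using hpy
  have hcau : CauchySeq (fun n => Q (u n)) := by
    have h0 := hu'.cauchySeq
    rw [cauchySeq_iff_tendsto_dist_atTop_0] at h0 ⊢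
    refine squeeze_zero (fun _ => dist_nonneg) (fun n => ?_) (by simpa using h0.const_mul N)
    simpa only [dist_eq_norm, _root_.map_sub] using hQP (u n.1 - u n.2)
  obtain ⟨w, hw⟩ := cauchySeq_tendsto_of_complete hcau
  have hyw : inner 𝕜 y w = 0 := by
    refine tendsto_nhds_unique ((tendsto_const_nhds (x := y)).inner hw) ?_
    simp [hyQ]
  have key : ∀ (z : V) (t : ℝ), 0 ≤ t * RCLike.re (inner 𝕜 (P z) w) +
      t ^ 2 * RCLike.re (inner 𝕜 (P z) (Q z)) := by
    intro z t
    have h1 : Tendsto (fun n => RCLike.re (inner 𝕜 (P (u n + (t : 𝕜) • z)) (Q (u n + (t : 𝕜) • z))))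
        atTop (𝓝 (RCLike.re (inner 𝕜 (y + (t : 𝕜) • P z) (w + (t : 𝕜) • Q z)))) := by
      simp only [_root_.map_add, _root_.map_smul]
      exact (RCLike.continuous_re.tendsto _).comp
        ((hu'.add tendsto_const_nhds).inner (hw.add tendsto_const_nhds))
    have h2 := ge_of_tendsto' h1 (fun n => hpos _)
    simp only [inner_add_left, inner_add_right, inner_smul_left, inner_smul_right, hyw, hyQ,
      RCLike.conj_ofReal, _root_.map_add, RCLike.re_ofReal_mul, _root_.map_zero] at h2
    linarith
  have hre : ∀ z, RCLike.re (inner 𝕜 (P z) w) = 0 := by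
    intro z
    set b := RCLike.re (inner 𝕜 (P z) w)
    set q := RCLike.re (inner 𝕜 (P z) (Q z))
    have hq : 0 ≤ q := hpos z
    -- The quadratic `t b + t² q` is negative at `t = -b / (q + 1)` unless `b = 0`.
    have h := key z (-b / (q + 1))
    have h3 : -b / (q + 1) * b + (-b / (q + 1)) ^ 2 * q = - (b / (q + 1)) ^ 2 := by
      field_simp; ring
    have h4 : b / (q + 1) = 0 := by
      change 0 ≤ -b / (q + 1) * b + (-b / (q + 1)) ^ 2 * q at h
      nlinarith [sq_nonneg (b / (q + 1))]
    rcases div_eq_zero_iff.1 h4 with h | h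
    · exact h
    · linarith
  have hw0 : w = 0 := by
    have : w ∈ (LinearMap.range P)ᗮ := by
      rw [Submodule.mem_orthogonal]
      rintro _ ⟨z, rfl⟩
      -- Real parts suffice: replace `z` by its multiple by `⟪P z, w⟫`.
      have h := hre (inner 𝕜 (P z) w • z)
      rw [_root_.map_smul, inner_smul_left, RCLike.conj_mul] at h
      norm_cast at h
      simpa using h
    simpa [hP] using this
  have hlim : Tendsto (fun n => M * ‖Q (u n)‖) atTop (𝓝 0) := by
    simpa [hw0] using hw.norm.const_mul M
  exact tendsto_nhds_unique hu' (squeeze_zero_norm (fun n => hPQ _) hlim)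

/-! ### Graph forms of (essential) selfadjointness -/

section Graph

variable {𝕜 H : Type*} [RCLike 𝕜] [NormedAddCommGroup H] [InnerProductSpace 𝕜 H]

theorem adjoint_topologicalClosure (g : Submodule 𝕜 (H × H)) :
    g.topologicalClosure.adjoint = g.adjoint := by
  ext x
  simp only [Submodule.mem_adjoint_iff]
  refine ⟨fun h a b hab => h a b (g.le_topologicalClosure hab), fun h a b hab => ?_⟩
  have hcl : IsClosed {p : H × H | inner 𝕜 p.2 x.1 - inner 𝕜 p.1 x.2 = 0} :=
    isClosed_eq (by fun_prop) continuous_const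
  exact closure_minimal (fun p hp => h p.1 p.2 hp) hcl hab

theorem graph_le_adjoint {A : H →ₗ.[𝕜] H} (hA : A.IsSymmetricOp) : A.graph ≤ A.graph.adjoint := by
  intro p hp
  rw [Submodule.mem_adjoint_iff]
  intro a b hab
  obtain ⟨x, rfl, hx⟩ := (LinearPMap.mem_graph_iff _).1 hab
  obtain ⟨y, hy, hy'⟩ := (LinearPMap.mem_graph_iff _).1 hp
  replace hx : A x = b := hx
  rw [← hx, ← hy, ← hy', hA, sub_self]

theorem isClosed_adjoint (g : Submodule 𝕜 (H × H)) : IsClosed (g.adjoint : Set (H × H)) := by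
  have : (g.adjoint : Set (H × H)) = ⋂ p ∈ g, {x | inner 𝕜 p.2 x.1 - inner 𝕜 p.1 x.2 = 0} := by
    ext x
    simp [Submodule.mem_adjoint_iff]
  rw [this]
  exact isClosed_biInter fun p _ => isClosed_eq (by fun_prop) continuous_const

theorem closure_graph_le_adjoint {A : H →ₗ.[𝕜] H} (hA : A.IsSymmetricOp) :
    A.graph.topologicalClosure ≤ A.graph.adjoint :=
  Submodule.topologicalClosure_minimal _ (graph_le_adjoint hA) (isClosed_adjoint _)

variable [CompleteSpace H]

theorem isSelfAdjointOp_iff_graph (A : H →ₗ.[𝕜] H) :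
    A.IsSelfAdjointOp ↔ Dense (A.domain : Set H) ∧ A.graph.adjoint = A.graph := by
  refine and_congr_right fun hd => ?_
  rw [← LinearPMap.adjoint_graph_eq_graph_adjoint hd]
  exact ⟨fun h => by rw [h], fun h => LinearPMap.eq_of_eq_graph h⟩

theorem isEssSelfAdjointOp_iff_graph (A : H →ₗ.[𝕜] H) :
    A.IsEssSelfAdjointOp ↔
      Dense (A.domain : Set H) ∧ A.graph.adjoint = A.graph.topologicalClosure := by
  constructor
  · rintro ⟨hc, hd, hs⟩
    have hg := hc.graph_closure_eq_closure_graph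
    constructor
    · -- Domain points of the closure are limits of domain points, by projecting the graphs.
      refine dense_closure.1 (hd.mono fun x hx => ?_)
      have hm : ((x, A.closure ⟨x, hx⟩) : H × H) ∈ A.graph.topologicalClosure := by
        rw [hg]; exact A.closure.mem_graph ⟨x, hx⟩
      refine map_mem_closure continuous_fst hm fun p hp => ?_
      exact LinearPMap.mem_domain_of_mem_graph (y := p.2) hp
    · rw [← adjoint_topologicalClosure, hg, ← LinearPMap.adjoint_graph_eq_graph_adjoint hd, hs]
  · rintro ⟨hd, hs⟩
    have hc : A.IsClosable :=
      ⟨A.adjoint, by rw [LinearPMap.adjoint_graph_eq_graph_adjoint hd, hs]⟩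
    have hg := hc.graph_closure_eq_closure_graph
    have hd' : Dense (A.closure.domain : Set H) := hd.mono A.le_closure.1
    refine ⟨hc, hd', LinearPMap.eq_of_eq_graph ?_⟩
    rw [LinearPMap.adjoint_graph_eq_graph_adjoint hd', ← hg, adjoint_topologicalClosure, hs]

theorem isSelfAdjointOp_iff_ess_and_closed (A : H →ₗ.[𝕜] H) :
    A.IsSelfAdjointOp ↔ A.IsEssSelfAdjointOp ∧ A.IsClosed := by
  rw [isSelfAdjointOp_iff_graph, isEssSelfAdjointOp_iff_graph]
  constructor
  · rintro ⟨hd, hs⟩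
    have hc : A.IsClosed := by
      have := isClosed_adjoint A.graph
      rwa [hs] at this
    exact ⟨⟨hd, by rw [hs, hc.submodule_topologicalClosure_eq]⟩, hc⟩
  · rintro ⟨⟨hd, hs⟩, hc⟩
    exact ⟨hd, by rw [hs, hc.submodule_topologicalClosure_eq]⟩

end Graph

/-! ### The range criterion -/

section Doubling

variable {𝕜 H : Type*} [RCLike 𝕜] [NormedAddCommGroup H] [InnerProductSpace 𝕜 H]

/-- The map `(x, y) ↦ (A x - l y, A y + l x)` into the `L²` product `H × H`: the operator `A + i l`
on the complexification, written without complex scalars. -/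
noncomputable def shiftedDouble (A : H →ₗ.[𝕜] H) (l : ℝ) :
    A.domain × A.domain →ₗ[𝕜] WithLp 2 (H × H) :=
  (WithLp.linearEquiv 2 𝕜 (H × H)).symm.toLinearMap ∘ₗ
    LinearMap.prod
      (A.toFun ∘ₗ LinearMap.fst 𝕜 _ _ - (l : 𝕜) • A.domain.subtype ∘ₗ LinearMap.snd 𝕜 _ _)
      (A.toFun ∘ₗ LinearMap.snd 𝕜 _ _ + (l : 𝕜) • A.domain.subtype ∘ₗ LinearMap.fst 𝕜 _ _)

theorem shiftedDouble_apply (A : H →ₗ.[𝕜] H) (l : ℝ) (u : A.domain × A.domain) :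
    shiftedDouble A l u =
      WithLp.toLp 2 (A u.1 - (l : 𝕜) • (u.2 : H), A u.2 + (l : 𝕜) • (u.1 : H)) := rfl

theorem mem_orthogonal_range_iff (A : H →ₗ.[𝕜] H) (l : ℝ) (w : WithLp 2 (H × H)) :
    w ∈ (LinearMap.range (shiftedDouble A l))ᗮ ↔
      (w.fst, -((l : 𝕜) • w.snd)) ∈ A.graph.adjoint ∧ (w.snd, (l : 𝕜) • w.fst) ∈ A.graph.adjoint := by
  have hg : ∀ p : H × H, p ∈ A.graph.adjoint ↔
      ∀ x : A.domain, inner 𝕜 (A x) p.1 - inner 𝕜 (x : H) p.2 = 0 := by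
    intro p
    rw [Submodule.mem_adjoint_iff]
    constructor
    · exact fun h x => h _ _ (A.mem_graph x)
    · intro h a b hab
      obtain ⟨x, rfl, hx⟩ := (LinearPMap.mem_graph_iff _).1 hab
      replace hx : A x = b := hx
      rw [← hx]; exact h x
  have ho : w ∈ (LinearMap.range (shiftedDouble A l))ᗮ ↔
      ∀ u, inner 𝕜 (shiftedDouble A l u) w = 0 :=
    ⟨fun h u => (Submodule.mem_orthogonal _ _).1 h _ ⟨u, rfl⟩, fun h =>
      (Submodule.mem_orthogonal _ _).2 (by rintro _ ⟨u, rfl⟩; exact h u)⟩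
  have ho' : w ∈ (LinearMap.range (shiftedDouble A l))ᗮ ↔ ∀ x y : A.domain,
      inner 𝕜 (A x - (l : 𝕜) • (y : H)) w.fst + inner 𝕜 (A y + (l : 𝕜) • (x : H)) w.snd = 0 :=
    ho.trans Prod.forall
  rw [ho']
  simp only [hg, inner_add_left, inner_sub_left, inner_smul_left, inner_smul_right,
    inner_neg_right, RCLike.conj_ofReal]
  constructor
  · intro h
    refine ⟨fun x => ?_, fun y => ?_⟩
    · have := h x 0
      simp at this
      linear_combination this
    · have := h 0 y
      simp at this
      linear_combination this
  · rintro ⟨h1, h2⟩ x y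
    linear_combination h1 x + h2 y

variable [CompleteSpace H]

/-- The decomposition behind the direction from dense range: for `(f, h)` in the adjoint graph,
project `(l f, h)` onto the closure of `{(l x, A x)}`; the residual, with components suitably
scaled, is orthogonal to the range of `shiftedDouble A l`. -/
theorem isEssSelfAdjointOp_iff_orthogonal_range {A : H →ₗ.[𝕜] H} (hA : A.IsSymmetricOp) {l : ℝ}
    (hl : 0 < l) :
    A.IsEssSelfAdjointOp ↔
      Dense (A.domain : Set H) ∧ (LinearMap.range (shiftedDouble A l))ᗮ = ⊥ := by
  have hl' : (l : 𝕜) ≠ 0 := by exact_mod_cast hl.ne'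
  rw [isEssSelfAdjointOp_iff_graph]
  refine and_congr_right fun hd => ⟨fun hs => ?_, fun hr => ?_⟩
  · rw [Submodule.eq_bot_iff]
    intro w hw
    obtain ⟨h1, h2⟩ := (mem_orthogonal_range_iff A l w).1 hw
    rw [hs] at h2
    rw [← adjoint_topologicalClosure, Submodule.mem_adjoint_iff] at h1
    -- Both pairs lie in the symmetric closed graph, so `l ‖w₁‖² + l ‖w₂‖² = 0`.
    have h := h1 _ _ h2
    simp only [inner_smul_left, inner_neg_right, inner_smul_right, RCLike.conj_ofReal,
      inner_self_eq_norm_sq_to_K] at h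
    have h' : l * ‖w.fst‖ ^ 2 + l * ‖w.snd‖ ^ 2 = 0 := by
      have : ((l * ‖w.fst‖ ^ 2 + l * ‖w.snd‖ ^ 2 : ℝ) : 𝕜) = 0 := by
        push_cast; linear_combination h
      exact_mod_cast this
    have e : ‖w‖ ^ 2 = ‖w.fst‖ ^ 2 + ‖w.snd‖ ^ 2 := WithLp.prod_norm_sq_eq_of_L2 w
    have e' : l * ‖w‖ ^ 2 = 0 := by rw [e]; linarith
    simpa [hl.ne'] using e'
  · refine le_antisymm ?_ (closure_graph_le_adjoint hA)
    rintro ⟨f, h⟩ hfh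
    let L : WithLp 2 (H × H) →ₗ[𝕜] H × H :=
      (LinearMap.prodMap ((l : 𝕜)⁻¹ • LinearMap.id) LinearMap.id) ∘ₗ
        (WithLp.linearEquiv 2 𝕜 (H × H)).toLinearMap
    have hL : ∀ w, L w = ((l : 𝕜)⁻¹ • w.fst, w.snd) := fun w => rfl
    have hLc : Continuous L := by
      simp only [funext hL]
      fun_prop
    let K : Submodule 𝕜 (WithLp 2 (H × H)) := A.graph.topologicalClosure.comap L
    have hK : IsClosed (K : Set (WithLp 2 (H × H))) :=
      A.graph.isClosed_topologicalClosure.preimage hLc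
    have : CompleteSpace K := hK.completeSpace_coe
    obtain ⟨k, hk, r, hr', hkr⟩ := K.exists_add_mem_mem_orthogonal (WithLp.toLp 2 ((l : 𝕜) • f, h))
    have hk' : L k ∈ A.graph.topologicalClosure := hk
    have hsum : (f, h) = L k + L r := by
      rw [← _root_.map_add, ← hkr, hL]
      simp [hl']
    have h1 : L r ∈ A.graph.adjoint := by
      have e : L r = (f, h) - L k := by rw [hsum]; abel
      rw [e]
      exact sub_mem hfh (closure_graph_le_adjoint hA hk')
    have h2 : (r.snd, -((l : 𝕜) • r.fst)) ∈ A.graph.adjoint := by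
      rw [Submodule.mem_adjoint_iff]
      intro a b hab
      have hm : WithLp.toLp 2 ((l : 𝕜) • a, b) ∈ K := by
        have e : L (WithLp.toLp 2 ((l : 𝕜) • a, b)) = (a, b) := by
          rw [hL]
          simp [hl']
        rw [Submodule.mem_comap, e]
        exact A.graph.le_topologicalClosure hab
      have := (Submodule.mem_orthogonal _ _).1 hr' _ hm
      simp only [WithLp.prod_inner_apply, inner_smul_left, RCLike.conj_ofReal] at this
      simp only [inner_neg_right, inner_smul_right, WithLp.ofLp_fst, WithLp.ofLp_snd] at this ⊢
      linear_combination this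
    have h3 : WithLp.toLp 2 (-r.fst, r.snd) ∈ (LinearMap.range (shiftedDouble A l))ᗮ := by
      rw [mem_orthogonal_range_iff]
      constructor
      · have := A.graph.adjoint.smul_mem (-(l : 𝕜)) h1
        rw [hL] at this
        simpa [hl'] using this
      · simpa using h2
    rw [hr, Submodule.mem_bot] at h3
    have h4 : r.fst = 0 := by simpa using congrArg WithLp.fst h3
    have h5 : r.snd = 0 := by simpa using congrArg WithLp.snd h3
    have h6 : L r = 0 := by rw [hL, h4, h5]; simp
    rw [hsum, h6, add_zero]
    exact hk'

end Doubling

/-! ### Comparison of two operators on the same domain -/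

section Comparison

variable {𝕜 H : Type*} [RCLike 𝕜] [NormedAddCommGroup H] [InnerProductSpace 𝕜 H]
  {D : Submodule 𝕜 H} {a c : D →ₗ[𝕜] H}

theorem re_inner_shiftedDouble (ha : IsSymmetricOp ⟨D, a⟩) (hc : IsSymmetricOp ⟨D, c⟩)
    (l : ℝ) (u : D × D) :
    RCLike.re (inner 𝕜 (shiftedDouble ⟨D, a⟩ l u) (shiftedDouble ⟨D, c⟩ l u)) =
      RCLike.re (inner 𝕜 (a u.1) (c u.1)) + RCLike.re (inner 𝕜 (a u.2) (c u.2)) +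
        l ^ 2 * (‖(u.1 : H)‖ ^ 2 + ‖(u.2 : H)‖ ^ 2) := by
  have h1 : inner 𝕜 (a u.1) (u.2 : H) = inner 𝕜 (u.1 : H) (a u.2) := ha u.1 u.2
  have h2 : inner 𝕜 (c u.2) (u.1 : H) = inner 𝕜 (u.2 : H) (c u.1) := hc u.2 u.1
  have h3 := congrArg RCLike.re h1
  have h4 := congrArg RCLike.re h2
  rw [inner_re_symm (𝕜 := 𝕜) (u.1 : H)] at h3
  rw [inner_re_symm (𝕜 := 𝕜) (c u.2)] at h4
  rw [shiftedDouble_apply, shiftedDouble_apply, WithLp.prod_inner_apply]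
  simp only [inner_add_left, inner_sub_left, inner_add_right, inner_sub_right, inner_smul_left,
    inner_smul_right, RCLike.conj_ofReal, _root_.map_add, _root_.map_sub, RCLike.re_ofReal_mul,
    inner_self_eq_norm_sq, LinearPMap.mk_apply]
  linear_combination l * h4 - l * h3

theorem norm_sq_shiftedDouble (ha : IsSymmetricOp ⟨D, a⟩) (l : ℝ) (u : D × D) :
    ‖shiftedDouble ⟨D, a⟩ l u‖ ^ 2 =
      ‖a u.1‖ ^ 2 + ‖a u.2‖ ^ 2 + l ^ 2 * (‖(u.1 : H)‖ ^ 2 + ‖(u.2 : H)‖ ^ 2) := by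
  have := re_inner_shiftedDouble ha ha l u
  simpa only [inner_self_eq_norm_sq] using this

theorem norm_shiftedDouble_le (ha : IsSymmetricOp ⟨D, a⟩) (hc : IsSymmetricOp ⟨D, c⟩)
    {α β l : ℝ} (hα : 0 ≤ α) (hβ : 0 ≤ β) (hl : 1 ≤ l)
    (hac : ∀ x : D, ‖a x‖ ^ 2 ≤ α * ‖c x‖ ^ 2 + β * ‖(x : H)‖ ^ 2) (u : D × D) :
    ‖shiftedDouble ⟨D, a⟩ l u‖ ≤ √(α + β + 1) * ‖shiftedDouble ⟨D, c⟩ l u‖ := by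
  refine le_of_sq_le_sq ?_ (by positivity)
  rw [mul_pow, Real.sq_sqrt (by positivity), norm_sq_shiftedDouble ha, norm_sq_shiftedDouble hc]
  have h1 := hac u.1
  have h2 := hac u.2
  set n := ‖(u.1 : H)‖ ^ 2 + ‖(u.2 : H)‖ ^ 2 with hn
  set m := ‖c u.1‖ ^ 2 + ‖c u.2‖ ^ 2 with hm
  have hn0 : 0 ≤ n := by positivity
  have hm0 : 0 ≤ m := by positivity
  have h3 : β * n ≤ β * (l ^ 2 * n) := by
    refine mul_le_mul_of_nonneg_left ?_ hβ
    nlinarith [mul_nonneg (by nlinarith : 0 ≤ l ^ 2 - 1) hn0]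
  have h4 : 0 ≤ α * (l ^ 2 * n) := by positivity
  have h5 : 0 ≤ β * m := by positivity
  have h6 : ‖a u.1‖ ^ 2 + ‖a u.2‖ ^ 2 ≤ α * m + β * n := by
    rw [hm, hn]; linarith
  nlinarith

variable [CompleteSpace H]

open Filter Topology in
/-- If `a` is `c`-bounded and `c` is `a`-bounded, then `c` inherits closedness from `a`: along a
sequence whose graph points under `c` converge, the values of `a` are Cauchy. -/
theorem isClosed_of_relBounded {α β α' β' : ℝ}
    (hac : ∀ x : D, ‖a x‖ ^ 2 ≤ α * ‖c x‖ ^ 2 + β * ‖(x : H)‖ ^ 2)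
    (hca : ∀ x : D, ‖c x‖ ^ 2 ≤ α' * ‖a x‖ ^ 2 + β' * ‖(x : H)‖ ^ 2)
    (h : LinearPMap.IsClosed ⟨D, a⟩) : LinearPMap.IsClosed ⟨D, c⟩ := by
  refine IsSeqClosed.isClosed ?_
  rintro p ⟨x, y⟩ hp hlim
  have hp' : ∀ n, ∃ z : D, (z : H) = (p n).1 ∧ c z = (p n).2 := fun n =>
    (LinearPMap.mem_graph_iff _).1 (hp n)
  choose z hz hz' using hp'
  have hx : Tendsto (fun n => (z n : H)) atTop (𝓝 x) := by
    simpa only [hz, Function.comp_def] using (continuous_fst.tendsto _).comp hlim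
  have hy : Tendsto (fun n => c (z n)) atTop (𝓝 y) := by
    simpa only [hz', Function.comp_def] using (continuous_snd.tendsto _).comp hlim
  have hcau : CauchySeq (fun n => a (z n)) := by
    have h1 := hx.cauchySeq
    have h2 := hy.cauchySeq
    rw [cauchySeq_iff_tendsto_dist_atTop_0] at h1 h2 ⊢
    have h3 := ((h2.pow 2).const_mul α).add ((h1.pow 2).const_mul β)
    have h4 : Tendsto (fun n : ℕ × ℕ => dist (a (z n.1)) (a (z n.2)) ^ 2) atTop (𝓝 0) := by
      refine squeeze_zero (fun _ => by positivity) (fun n => ?_) (by simpa using h3)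
      simpa only [dist_eq_norm, _root_.map_sub, Submodule.coe_sub] using hac (z n.1 - z n.2)
    simpa [Real.sqrt_sq dist_nonneg] using h4.sqrt
  obtain ⟨w, hw⟩ := cauchySeq_tendsto_of_complete hcau
  have hmem : (x, w) ∈ (LinearPMap.mk D a).graph :=
    h.mem_of_tendsto (hx.prodMk_nhds hw) (Eventually.of_forall fun n =>
      (LinearPMap.mk D a).mem_graph (z n))
  obtain ⟨x', hx', hw'⟩ := (LinearPMap.mem_graph_iff _).1 hmem
  replace hx' : (x' : H) = x := hx'
  replace hw' : a x' = w := hw'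
  have hc : Tendsto (fun n => c (z n)) atTop (𝓝 (c x')) := by
    rw [tendsto_iff_norm_sub_tendsto_zero] at hx hw ⊢
    have h3 := ((hw.pow 2).const_mul α').add ((hx.pow 2).const_mul β')
    have h4 : Tendsto (fun n => ‖c (z n) - c x'‖ ^ 2) atTop (𝓝 0) := by
      refine squeeze_zero (fun _ => by positivity) (fun n => ?_) (by simpa using h3)
      simpa only [_root_.map_sub, Submodule.coe_sub, hx', hw'] using hca (z n - x')
    simpa [Real.sqrt_sq (norm_nonneg _)] using h4.sqrt
  have hyc : c x' = y := tendsto_nhds_unique hc hy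
  exact (LinearPMap.mem_graph_iff _).2 ⟨x', hx', hyc⟩

/-- One direction of the comparison. The norm inequality is equivalent to
`-γ / 2 * ‖x‖² ≤ re ⟪a x, c x⟫`, and the shift `l = γ + 1` absorbs the negative part. -/
theorem isEssSelfAdjointOp_of_isEssSelfAdjointOp (ha : IsSymmetricOp ⟨D, a⟩)
    (hc : IsSymmetricOp ⟨D, c⟩) {α β α' β' γ : ℝ}
    (hα : 0 ≤ α) (hβ : 0 ≤ β) (hα' : 0 ≤ α') (hβ' : 0 ≤ β') (hγ : 0 ≤ γ)
    (hac : ∀ x : D, ‖a x‖ ^ 2 ≤ α * ‖c x‖ ^ 2 + β * ‖(x : H)‖ ^ 2)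
    (hca : ∀ x : D, ‖c x‖ ^ 2 ≤ α' * ‖a x‖ ^ 2 + β' * ‖(x : H)‖ ^ 2)
    (hsub : ∀ x : D, ‖a x - c x‖ ^ 2 ≤ ‖a x‖ ^ 2 + ‖c x‖ ^ 2 + γ * ‖(x : H)‖ ^ 2)
    (h : IsEssSelfAdjointOp ⟨D, a⟩) : IsEssSelfAdjointOp ⟨D, c⟩ := by
  -- Any shift with `1 ≤ l` and `γ / 2 ≤ l²` works.
  have hl : 1 ≤ γ + 1 := by linarith
  rw [isEssSelfAdjointOp_iff_orthogonal_range ha (l := γ + 1) (by linarith)] at h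
  rw [isEssSelfAdjointOp_iff_orthogonal_range hc (l := γ + 1) (by linarith)]
  refine ⟨h.1, orthogonal_range_eq_bot_of_accretive (shiftedDouble ⟨D, a⟩ (γ + 1))
    (shiftedDouble ⟨D, c⟩ (γ + 1)) _ _ (norm_shiftedDouble_le ha hc hα hβ hl hac)
    (norm_shiftedDouble_le hc ha hα' hβ' hl hca) (fun u => ?_) h.2⟩
  rw [re_inner_shiftedDouble ha hc]
  have hre : ∀ x : D, -(γ / 2) * ‖(x : H)‖ ^ 2 ≤ RCLike.re (inner 𝕜 (a x) (c x)) := by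
    intro x
    have h1 := hsub x
    rw [norm_sub_sq (𝕜 := 𝕜)] at h1
    linarith
  have h1 := hre u.1
  have h2 := hre u.2
  have h3 : 0 ≤ ((γ + 1) ^ 2 - γ / 2) * (‖(u.1 : H)‖ ^ 2 + ‖(u.2 : H)‖ ^ 2) :=
    mul_nonneg (by nlinarith) (by positivity)
  linarith

end Comparison

/-- **Corollary (symmetric variant).** Let `A, C` be symmetric operators in a Hilbert space
`H` with common domain `𝒟`, each bounded with respect to the other, such that
`‖(A−C) x‖² ≤ ‖A x‖² + ‖C x‖² + γ‖x‖²` on `𝒟` for some `γ > 0`. Then `A` is selfadjoint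
(resp. essentially selfadjoint) iff `C` is selfadjoint (resp. essentially selfadjoint). -/
theorem selfadjoint_iff_selfadjoint {𝕜 H : Type*} [RCLike 𝕜]
    [NormedAddCommGroup H] [InnerProductSpace 𝕜 H] [CompleteSpace H]
    (A C : H →ₗ.[𝕜] H) (hAsymm : A.IsSymmetricOp) (hCsymm : C.IsSymmetricOp)
    (hdom : A.domain = C.domain)
    (hAC : ∃ α β : ℝ, 0 ≤ α ∧ 0 ≤ β ∧ ∀ x : C.domain,
      ‖A ⟨x.1, hdom.ge x.2⟩‖ ^ 2 ≤ α * ‖C x‖ ^ 2 + β * ‖(x : H)‖ ^ 2)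
    (hCA : ∃ α β : ℝ, 0 ≤ α ∧ 0 ≤ β ∧ ∀ x : A.domain,
      ‖C ⟨x.1, hdom.le x.2⟩‖ ^ 2 ≤ α * ‖A x‖ ^ 2 + β * ‖(x : H)‖ ^ 2)
    (hγ : ∃ γ : ℝ, 0 < γ ∧ ∀ x : A.domain,
      ‖(A - C) ⟨x.1, Submodule.mem_inf.mpr ⟨x.2, hdom.le x.2⟩⟩‖ ^ 2 ≤
        ‖A x‖ ^ 2 + ‖C ⟨x.1, hdom.le x.2⟩‖ ^ 2 + γ * ‖(x : H)‖ ^ 2) :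
    (A.IsSelfAdjointOp ↔ C.IsSelfAdjointOp) ∧
      (A.IsEssSelfAdjointOp ↔ C.IsEssSelfAdjointOp) := by
  obtain ⟨D, a⟩ := A
  obtain ⟨D', c⟩ := C
  obtain rfl : D = D' := hdom
  obtain ⟨α, β, hα, hβ, hac⟩ := hAC
  obtain ⟨α', β', hα', hβ', hca⟩ := hCA
  obtain ⟨γ, hγ, hsub⟩ := hγ
  replace hac : ∀ x : D, ‖a x‖ ^ 2 ≤ α * ‖c x‖ ^ 2 + β * ‖(x : H)‖ ^ 2 := hac
  replace hca : ∀ x : D, ‖c x‖ ^ 2 ≤ α' * ‖a x‖ ^ 2 + β' * ‖(x : H)‖ ^ 2 := hca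
  replace hsub : ∀ x : D, ‖a x - c x‖ ^ 2 ≤ ‖a x‖ ^ 2 + ‖c x‖ ^ 2 + γ * ‖(x : H)‖ ^ 2 := by
    intro x
    simpa [LinearPMap.sub_apply] using hsub x
  have hsub' : ∀ x : D, ‖c x - a x‖ ^ 2 ≤ ‖c x‖ ^ 2 + ‖a x‖ ^ 2 + γ * ‖(x : H)‖ ^ 2 := by
    intro x
    rw [norm_sub_rev]
    linarith [hsub x]
  have hess : IsEssSelfAdjointOp ⟨D, a⟩ ↔ IsEssSelfAdjointOp ⟨D, c⟩ :=
    ⟨isEssSelfAdjointOp_of_isEssSelfAdjointOp hAsymm hCsymm hα hβ hα' hβ' hγ.le hac hca hsub,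
      isEssSelfAdjointOp_of_isEssSelfAdjointOp hCsymm hAsymm hα' hβ' hα hβ hγ.le hca hac hsub'⟩
  refine ⟨?_, hess⟩
  rw [isSelfAdjointOp_iff_ess_and_closed, isSelfAdjointOp_iff_ess_and_closed]
  exact and_congr hess ⟨isClosed_of_relBounded hac hca, isClosed_of_relBounded hca hac⟩
end

section
/- Let A and C be symmetric linear operators in a real or complex Hilbert space H with common dense domain 𝒟. Assume there exist a > 0 and b with 0 < b < 1 such that ‖(A−C) x‖ ≤ a‖x‖ + b(‖A x‖ + ‖C x‖) for all x ∈ 𝒟. Then A is selfadjoint if and only if C is selfadjoint, and A is essentially selfadjoint if and only if C is essentially selfadjoint. -/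
/-!
The operators `A` and `C` are joined by the segment `T κ = A + κ (C - A)`, `0 ≤ κ ≤ 1`. With
`B = C - A`, the triangle inequalities `‖A x‖ ≤ ‖T κ x‖ + κ ‖B x‖` and
`‖C x‖ ≤ ‖T κ x‖ + (1 - κ) ‖B x‖` turn the hypothesis into `(1 - b) ‖B x‖ ≤ a ‖x‖ + 2 b ‖T κ x‖`:
`B` is bounded relative to `T κ`, uniformly in `κ`. So it suffices to see that essential
selfadjointness survives sufficiently small steps along the segment.

For this, essential selfadjointness of a symmetric, densely defined `T` is replaced by a
deficiency criterion that makes sense over `ℝ` as well: for `l > 0`, the only pair `(u, v)` with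
`T* u = -l v` and `T* v = l u` is `(0, 0)` (`DeficiencyTrivial`). Equivalently, the operator
`S (x, y) = (T x - l y, T y + l x)` on `H ⊕ H` (it is `T + i l` on the complexification when
`𝕜 = ℝ`) has dense range.

* Criterion from essential selfadjointness: `u` and `v` lie in the domain of the symmetric operator
  `T.closure`, so `-l ‖v‖² = l ‖u‖²`.
* Essential selfadjointness from the criterion: if `(p, q)` in the graph of `T*` is orthogonal to
  the graph of `T` for the inner product weighted by `l²` on the first factor, then `(q, l p)` is a
  pair as above. Hence the graph of `T*` is the closure of the graph of `T`.
* Stability: symmetry gives `‖S (x, y)‖² = ‖T x‖² + ‖T y‖² + l² (‖x‖² + ‖y‖²)`, so with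
  `l = a / (2 b)` a small step changes `S z` by at most a fixed fraction of `‖S z‖`, and such a
  perturbation preserves density of the range (`orthogonal_range_eq_bot_of_le`).

Finally, an operator is selfadjoint iff it is closed and essentially selfadjoint, and `A` is closed
iff `C` is, because their graph norms are equivalent.
-/

open LinearPMap

namespace Kato

variable {𝕜 H : Type*} [RCLike 𝕜] [NormedAddCommGroup H] [InnerProductSpace 𝕜 H]

open scoped InnerProductSpace

/-! ### The deficiency criterion -/

/-- The only solution of `T* u = -l v`, `T* v = l u` is `u = v = 0`. The two equations are
expressed weakly, by pairing with the vectors of the domain `D` of `T`. -/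
def DeficiencyTrivial {D : Submodule 𝕜 H} (T : D →ₗ[𝕜] H) (l : ℝ) : Prop :=
  ∀ u v : H, (∀ x : D, ⟪u, T x⟫_𝕜 = -((l : 𝕜) * ⟪v, (x : H)⟫_𝕜)) →
    (∀ x : D, ⟪v, T x⟫_𝕜 = (l : 𝕜) * ⟪u, (x : H)⟫_𝕜) → u = 0 ∧ v = 0

/-- The relation "`T* p = q`" only sees the closure of the graph of `T`. -/
lemma inner_eq_of_mem_closure_graph (T : H →ₗ.[𝕜] H) {p q : H}
    (h : ∀ x : T.domain, ⟪q, (x : H)⟫_𝕜 = ⟪p, T x⟫_𝕜) {z : H × H}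
    (hz : z ∈ T.graph.topologicalClosure) : ⟪q, z.1⟫_𝕜 = ⟪p, z.2⟫_𝕜 := by
  have hcl : IsClosed {z : H × H | ⟪q, z.1⟫_𝕜 = ⟪p, z.2⟫_𝕜} :=
    isClosed_eq (by fun_prop) (by fun_prop)
  refine closure_minimal ?_ hcl hz
  intro w hw
  obtain ⟨x, hx1, hx2⟩ := (LinearPMap.mem_graph_iff T).1 hw
  simp only [Set.mem_ofPred_eq, ← hx1, ← hx2, h]

section Complete

variable [CompleteSpace H]

lemma isClosable_of_symmetric {T : H →ₗ.[𝕜] H} (hT : T.IsSymmetricOp)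
    (hd : Dense (T.domain : Set H)) : T.IsClosable := by
  have hle : T ≤ T.adjoint := LinearPMap.IsFormalAdjoint.le_adjoint hd hT
  exact (LinearPMap.adjoint_isClosed hd).isClosable.leIsClosable hle

lemma closure_symmetric {T : H →ₗ.[𝕜] H} (hT : T.IsSymmetricOp)
    (hd : Dense (T.domain : Set H)) : T.closure.IsSymmetricOp := by
  have hc := isClosable_of_symmetric hT hd
  have mem : ∀ x : T.closure.domain, ((x : H), T.closure x) ∈ T.graph.topologicalClosure := by
    intro x
    rw [hc.graph_closure_eq_closure_graph]
    exact LinearPMap.mem_graph _ x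
  intro x y
  refine inner_eq_of_mem_closure_graph T (fun z => ?_) (mem y)
  rw [← inner_conj_symm, ← inner_conj_symm (x : H)]
  exact congrArg _ (inner_eq_of_mem_closure_graph T (fun w => hT z w) (mem x)).symm

lemma deficiencyTrivial_of_ess {T : H →ₗ.[𝕜] H}
    (hess : T.IsEssSelfAdjointOp) {l : ℝ} (hl : 0 < l) : DeficiencyTrivial T.toFun l := by
  obtain ⟨hc, hdc, hadj⟩ := hess
  have key : ∀ p q : H, (∀ x : T.domain, ⟪q, (x : H)⟫_𝕜 = ⟪p, T x⟫_𝕜) →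
      ∃ x : T.closure.domain, (x : H) = p ∧ T.closure x = q := by
    intro p q h
    have h' : ∀ x : T.closure.domain, ⟪q, (x : H)⟫_𝕜 = ⟪p, T.closure x⟫_𝕜 := by
      intro x
      refine inner_eq_of_mem_closure_graph T h (z := ((x : H), T.closure x)) ?_
      rw [hc.graph_closure_eq_closure_graph]
      exact LinearPMap.mem_graph _ x
    have hp : p ∈ T.closure.adjoint.domain :=
      LinearPMap.mem_adjoint_domain_of_exists p ⟨q, h'⟩
    have hq : T.closure.adjoint ⟨p, hp⟩ = q := LinearPMap.adjoint_apply_eq hdc ⟨p, hp⟩ h'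
    have hg : (p, q) ∈ T.closure.adjoint.graph :=
      hq ▸ LinearPMap.mem_graph T.closure.adjoint ⟨p, hp⟩
    rw [hadj] at hg
    exact (LinearPMap.mem_graph_iff _).1 hg
  intro u v hu hv
  obtain ⟨x, rfl, hxv⟩ := key u (-((l : 𝕜) • v)) (fun x => by
    rw [inner_neg_left, inner_smul_left, RCLike.conj_ofReal]
    exact (hu x).symm)
  obtain ⟨y, rfl, hyu⟩ := key v ((l : 𝕜) • (x : H)) (fun z => by
    rw [inner_smul_left, RCLike.conj_ofReal]
    exact (hv z).symm)
  have hsym : T.closure.adjoint.IsFormalAdjoint T.closure :=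
    LinearPMap.adjoint_isFormalAdjoint hdc
  rw [hadj] at hsym
  have h1 : ⟪T.closure x, (y : H)⟫_𝕜 = ⟪(x : H), T.closure y⟫_𝕜 := hsym x y
  rw [hxv, hyu, inner_neg_left, inner_smul_left, inner_smul_right, RCLike.conj_ofReal,
    inner_self_eq_norm_sq_to_K, inner_self_eq_norm_sq_to_K] at h1
  have h2 : -(l * ‖(y : H)‖ ^ 2) = l * ‖(x : H)‖ ^ 2 := by exact_mod_cast h1
  have hx0 : ‖(x : H)‖ ^ 2 = 0 := by
    nlinarith [mul_nonneg hl.le (sq_nonneg ‖(x : H)‖), mul_nonneg hl.le (sq_nonneg ‖(y : H)‖)]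
  have hy0 : ‖(y : H)‖ ^ 2 = 0 := by
    nlinarith [mul_nonneg hl.le (sq_nonneg ‖(x : H)‖), mul_nonneg hl.le (sq_nonneg ‖(y : H)‖)]
  exact ⟨by simpa using hx0, by simpa using hy0⟩

/-- If the deficiency criterion holds, the graph of the adjoint is contained in the closure of the
graph: a vector of the former orthogonal to the latter (for the inner product with weight `l²` on
the first factor) solves the deficiency equations. -/
lemma mem_closure_graph_of_deficiencyTrivial {T : H →ₗ.[𝕜] H} (hT : T.IsSymmetricOp) {l : ℝ}
    (hl : 0 < l) (hdef : DeficiencyTrivial T.toFun l) {p q : H}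
    (h : ∀ x : T.domain, ⟪q, (x : H)⟫_𝕜 = ⟪p, T x⟫_𝕜) : (p, q) ∈ T.graph.topologicalClosure := by
  have hl' : (l : 𝕜) ≠ 0 := by exact_mod_cast hl.ne'
  -- `N` undoes the rescaling `(x, y) ↦ (l x, y)`, which turns the weighted inner product into the
  -- standard one.
  let N : WithLp 2 (H × H) →L[𝕜] H × H :=
    ((l : 𝕜)⁻¹ • WithLp.fstL 2 𝕜 H H).prod (WithLp.sndL 2 𝕜 H H)
  have hN : ∀ x y : H, N (WithLp.toLp 2 ((l : 𝕜) • x, y)) = (x, y) := by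
    intro x y
    simp [N, smul_smul, hl']
  let K : Submodule 𝕜 (WithLp 2 (H × H)) := T.graph.topologicalClosure.comap N.toLinearMap
  have hKc : IsClosed (K : Set (WithLp 2 (H × H))) :=
    T.graph.isClosed_topologicalClosure.preimage N.continuous
  have : CompleteSpace K := hKc.completeSpace_coe
  obtain ⟨k, hk, r, hr, hkr⟩ :=
    K.exists_add_mem_mem_orthogonal (WithLp.toLp 2 ((l : 𝕜) • p, q))
  have hNk : N k ∈ T.graph.topologicalClosure := hk
  obtain ⟨x, y, hxy⟩ : ∃ x y, N k = (x, y) := ⟨_, _, rfl⟩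
  have hsub : N r = (p - x, q - y) := by
    have h1 := congrArg N hkr
    rw [hN, _root_.map_add, hxy] at h1
    rw [← add_sub_cancel_left (x, y) (N r), ← h1]
    rfl
  rw [hxy] at hNk
  have hr1 : r.fst = (l : 𝕜) • (p - x) := by
    have h2 : (l : 𝕜)⁻¹ • r.fst = p - x := congrArg Prod.fst hsub
    rw [← h2, smul_inv_smul₀ hl']
  have hr2 : r.snd = q - y := congrArg Prod.snd hsub
  -- `(p - x, q - y)` still lies in the graph of the adjoint, since `T` is symmetric
  have hadj : ∀ z : T.domain, ⟪q - y, (z : H)⟫_𝕜 = ⟪p - x, T z⟫_𝕜 := by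
    intro z
    have h3 : ⟪T z, x⟫_𝕜 = ⟪(z : H), y⟫_𝕜 :=
      inner_eq_of_mem_closure_graph T (fun w => hT z w) hNk
    have h4 : ⟪x, T z⟫_𝕜 = ⟪y, (z : H)⟫_𝕜 := by
      rw [← inner_conj_symm, h3, inner_conj_symm]
    rw [inner_sub_left, inner_sub_left, h z, h4]
  have horth : ∀ z : T.domain, (l : 𝕜) * ((l : 𝕜) * ⟪p - x, (z : H)⟫_𝕜) + ⟪q - y, T z⟫_𝕜 = 0 := by
    intro z
    have hz : WithLp.toLp 2 ((l : 𝕜) • (z : H), T z) ∈ K := by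
      change N _ ∈ T.graph.topologicalClosure
      rw [hN]
      exact T.graph.le_topologicalClosure (LinearPMap.mem_graph T z)
    have := Submodule.inner_left_of_mem_orthogonal hz hr
    rw [WithLp.prod_inner_apply] at this
    change ⟪r.fst, (l : 𝕜) • (z : H)⟫_𝕜 + ⟪r.snd, T z⟫_𝕜 = 0 at this
    rwa [hr1, hr2, inner_smul_left, inner_smul_right, RCLike.conj_ofReal] at this
  obtain ⟨hu, hv⟩ := hdef (q - y) ((l : 𝕜) • (p - x))
    (fun z => by
      rw [inner_smul_left, RCLike.conj_ofReal]
      exact eq_neg_of_add_eq_zero_right (horth z))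
    (fun z => by
      rw [inner_smul_left, RCLike.conj_ofReal, hadj z]
      rfl)
  have hp : p = x := sub_eq_zero.1 ((smul_eq_zero.1 hv).resolve_left hl')
  rw [hp, sub_eq_zero.1 hu]
  exact hNk

lemma ess_of_deficiencyTrivial {T : H →ₗ.[𝕜] H} (hT : T.IsSymmetricOp)
    (hd : Dense (T.domain : Set H)) {l : ℝ} (hl : 0 < l) (hdef : DeficiencyTrivial T.toFun l) :
    T.IsEssSelfAdjointOp := by
  have hc := isClosable_of_symmetric hT hd
  have hle := LinearPMap.le_closure T
  have hdc : Dense (T.closure.domain : Set H) := hd.mono hle.1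
  refine ⟨hc, hdc, le_antisymm (LinearPMap.le_of_le_graph ?_)
    (LinearPMap.IsFormalAdjoint.le_adjoint hdc (closure_symmetric hT hd))⟩
  rintro ⟨p, q⟩ hpq
  obtain ⟨y, rfl, rfl⟩ := (LinearPMap.mem_graph_iff _).1 hpq
  rw [← hc.graph_closure_eq_closure_graph]
  refine mem_closure_graph_of_deficiencyTrivial hT hl hdef fun x => ?_
  have h1 := LinearPMap.adjoint_isFormalAdjoint hdc y ⟨x, hle.1 x.2⟩
  have h2 : T x = T.closure ⟨x, hle.1 x.2⟩ := hle.2 rfl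
  rw [h2]
  exact h1

/-! ### Stability of the criterion -/

/-- A perturbation that is small relative to `S` preserves density of the range, here expressed
as triviality of the orthogonal complement. -/
lemma orthogonal_range_eq_bot_of_le {V E : Type*} [AddCommGroup V] [Module 𝕜 V]
    [NormedAddCommGroup E] [InnerProductSpace 𝕜 E] [CompleteSpace E] (S S' : V →ₗ[𝕜] E) {c : ℝ}
    (hc : c < 1) (h : ∀ z, ‖S' z - S z‖ ≤ c * ‖S z‖) (hS : (LinearMap.range S)ᗮ = ⊥) :
    (LinearMap.range S')ᗮ = ⊥ := by
  rw [Submodule.eq_bot_iff]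
  intro w hw
  have hcl : IsClosed {f : E | ‖⟪w, f⟫_𝕜‖ ≤ c * (‖w‖ * ‖f‖)} :=
    isClosed_le (by fun_prop) (by fun_prop)
  have hsub : (LinearMap.range S : Set E) ⊆ {f : E | ‖⟪w, f⟫_𝕜‖ ≤ c * (‖w‖ * ‖f‖)} := by
    rintro _ ⟨z, rfl⟩
    have h0 : ⟪w, S' z⟫_𝕜 = 0 := Submodule.inner_left_of_mem_orthogonal (LinearMap.mem_range_self S' z) hw
    have h1 : ⟪w, S z⟫_𝕜 = -⟪w, S' z - S z⟫_𝕜 := by rw [inner_sub_right, h0]; ring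
    calc ‖⟪w, S z⟫_𝕜‖ = ‖⟪w, S' z - S z⟫_𝕜‖ := by rw [h1, norm_neg]
      _ ≤ ‖w‖ * ‖S' z - S z‖ := norm_inner_le_norm _ _
      _ ≤ ‖w‖ * (c * ‖S z‖) := by gcongr; exact h z
      _ = c * (‖w‖ * ‖S z‖) := by ring
  have htop := (Submodule.topologicalClosure_eq_top_iff (K := LinearMap.range S)).2 hS
  have hwcl : w ∈ (LinearMap.range S).topologicalClosure := htop ▸ Submodule.mem_top
  have hfin : ‖⟪w, w⟫_𝕜‖ ≤ c * (‖w‖ * ‖w‖) := closure_minimal hsub hcl hwcl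
  rw [inner_self_eq_norm_sq_to_K, ← RCLike.ofReal_pow,
    RCLike.norm_of_nonneg (sq_nonneg _)] at hfin
  have : ‖w‖ ^ 2 = 0 := by nlinarith [sq_nonneg ‖w‖]
  simpa using this

end Complete

/-- The operator `(x, y) ↦ (T x - l y, T y + l x)` from `D × D` to the Hilbert sum `H ⊕ H`. -/
noncomputable def shift {D : Submodule 𝕜 H} (T : D →ₗ[𝕜] H) (l : ℝ) :
    (D × D) →ₗ[𝕜] WithLp 2 (H × H) :=
  (WithLp.linearEquiv 2 𝕜 (H × H)).symm.toLinearMap ∘ₗ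
    ((T ∘ₗ LinearMap.fst 𝕜 D D - (l : 𝕜) • (D.subtype ∘ₗ LinearMap.snd 𝕜 D D)).prod
      (T ∘ₗ LinearMap.snd 𝕜 D D + (l : 𝕜) • (D.subtype ∘ₗ LinearMap.fst 𝕜 D D)))

lemma shift_apply {D : Submodule 𝕜 H} (T : D →ₗ[𝕜] H) (l : ℝ) (x y : D) :
    shift T l (x, y) = WithLp.toLp 2 (T x - (l : 𝕜) • (y : H), T y + (l : 𝕜) • (x : H)) := rfl

lemma deficiencyTrivial_iff {D : Submodule 𝕜 H} (T : D →ₗ[𝕜] H) (l : ℝ) :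
    DeficiencyTrivial T l ↔ (LinearMap.range (shift T l))ᗮ = ⊥ := by
  have inner_shift : ∀ (w : WithLp 2 (H × H)) (x y : D), ⟪w, shift T l (x, y)⟫_𝕜 =
      (⟪w.fst, T x⟫_𝕜 + (l : 𝕜) * ⟪w.snd, (x : H)⟫_𝕜) +
        (⟪w.snd, T y⟫_𝕜 - (l : 𝕜) * ⟪w.fst, (y : H)⟫_𝕜) := by
    intro w x y
    rw [shift_apply, WithLp.prod_inner_apply]
    change ⟪w.fst, T x - (l : 𝕜) • (y : H)⟫_𝕜 + ⟪w.snd, T y + (l : 𝕜) • (x : H)⟫_𝕜 = _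
    rw [inner_sub_right, inner_add_right, inner_smul_right, inner_smul_right]
    ring
  rw [Submodule.eq_bot_iff]
  constructor
  · intro hdef w hw
    have h0 : ∀ x y : D, ⟪w, shift T l (x, y)⟫_𝕜 = 0 := fun x y =>
      Submodule.inner_left_of_mem_orthogonal (LinearMap.mem_range_self _ (x, y)) hw
    obtain ⟨hu, hv⟩ := hdef w.fst w.snd
      (fun x => by
        have := h0 x 0
        rw [inner_shift] at this
        simp only [_root_.map_zero, ZeroMemClass.coe_zero, inner_zero_right, mul_zero, sub_zero,
          add_zero] at this
        exact eq_neg_of_add_eq_zero_left this)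
      (fun y => by
        have := h0 0 y
        rw [inner_shift] at this
        simp only [_root_.map_zero, ZeroMemClass.coe_zero, inner_zero_right, mul_zero, zero_add] at this
        exact sub_eq_zero.1 this)
    have h2 := WithLp.prod_norm_sq_eq_of_L2 w
    rw [hu, hv] at h2
    simpa using h2
  · intro h u v hu hv
    have hw := h (WithLp.toLp 2 (u, v)) (by
      rw [Submodule.mem_orthogonal']
      rintro _ ⟨⟨x, y⟩, rfl⟩
      rw [inner_shift]
      change (⟪u, T x⟫_𝕜 + (l : 𝕜) * ⟪v, (x : H)⟫_𝕜) + (⟪v, T y⟫_𝕜 - (l : 𝕜) * ⟪u, (y : H)⟫_𝕜) = 0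
      rw [hu, hv]
      ring)
    exact ⟨congrArg WithLp.fst hw, congrArg WithLp.snd hw⟩

/-- For symmetric `T` the cross terms in `‖T x - l y‖² + ‖T y + l x‖²` cancel. -/
lemma norm_shift_sq {D : Submodule 𝕜 H} {T : D →ₗ[𝕜] H}
    (hT : ∀ x y : D, ⟪T x, (y : H)⟫_𝕜 = ⟪(x : H), T y⟫_𝕜) (l : ℝ) (x y : D) :
    ‖shift T l (x, y)‖ ^ 2 =
      (‖T x‖ ^ 2 + l ^ 2 * ‖(x : H)‖ ^ 2) + (‖T y‖ ^ 2 + l ^ 2 * ‖(y : H)‖ ^ 2) := by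
  rw [shift_apply, WithLp.prod_norm_sq_eq_of_L2]
  change ‖T x - (l : 𝕜) • (y : H)‖ ^ 2 + ‖T y + (l : 𝕜) • (x : H)‖ ^ 2 = _
  rw [norm_sub_sq (𝕜 := 𝕜), norm_add_sq (𝕜 := 𝕜), inner_smul_right, inner_smul_right,
    RCLike.re_ofReal_mul, RCLike.re_ofReal_mul, hT x y, inner_re_symm (x : H), norm_smul, norm_smul,
    RCLike.norm_ofReal, mul_pow, mul_pow, sq_abs]
  ring

/-- One small step: the criterion passes from `T` to `T'` if the difference is `1 / √2`-small
relative to `x ↦ (‖T x‖² + l² ‖x‖²)^(1/2)`. -/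
lemma deficiencyTrivial_step [CompleteSpace H] {D : Submodule 𝕜 H} {T T' : D →ₗ[𝕜] H}
    (hT : ∀ x y : D, ⟪T x, (y : H)⟫_𝕜 = ⟪(x : H), T y⟫_𝕜) {l : ℝ}
    (h : ∀ x : D, ‖T' x - T x‖ ^ 2 ≤ 1 / 2 * (‖T x‖ ^ 2 + l ^ 2 * ‖(x : H)‖ ^ 2))
    (hdef : DeficiencyTrivial T l) : DeficiencyTrivial T' l := by
  rw [deficiencyTrivial_iff] at hdef ⊢
  have hc : √(1 / 2 : ℝ) < 1 := by
    rw [Real.sqrt_lt' one_pos]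
    norm_num
  refine orthogonal_range_eq_bot_of_le (shift T l) (shift T' l) hc ?_ hdef
  rintro ⟨x, y⟩
  refine abs_le_of_sq_le_sq' ?_ (by positivity) |>.2
  have hsub : shift T' l (x, y) - shift T l (x, y) = WithLp.toLp 2 (T' x - T x, T' y - T y) := by
    rw [shift_apply, shift_apply, ← WithLp.toLp_sub, Prod.mk_sub_mk, sub_sub_sub_cancel_right,
      add_sub_add_right_eq_sub]
  rw [hsub, mul_pow, Real.sq_sqrt (by norm_num), norm_shift_sq hT, WithLp.prod_norm_sq_eq_of_L2]
  change ‖T' x - T x‖ ^ 2 + ‖T' y - T y‖ ^ 2 ≤ _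
  linarith [h x, h y]

/-! ### The segment from `A` to `C` -/

/-- `C - A` is bounded relative to `A + κ (C - A)`, uniformly in `κ ∈ [0, 1]`. -/
lemma relative_bound {u v x : H} {a b κ : ℝ} (hb : 0 < b)
    (hκ0 : 0 ≤ κ) (hκ1 : κ ≤ 1) (h : ‖u - v‖ ≤ a * ‖x‖ + b * (‖u‖ + ‖v‖)) :
    (1 - b) * ‖v - u‖ ≤ a * ‖x‖ + 2 * b * ‖u + (κ : 𝕜) • (v - u)‖ := by
  have h1 : ‖u‖ ≤ ‖u + (κ : 𝕜) • (v - u)‖ + κ * ‖v - u‖ := by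
    have h2 := norm_sub_le (u + (κ : 𝕜) • (v - u)) ((κ : 𝕜) • (v - u))
    rwa [add_sub_cancel_right, norm_smul, RCLike.norm_of_nonneg hκ0] at h2
  have h3 : ‖v‖ ≤ ‖u + (κ : 𝕜) • (v - u)‖ + (1 - κ) * ‖v - u‖ := by
    have h4 := norm_add_le (u + (κ : 𝕜) • (v - u)) (((1 - κ : ℝ) : 𝕜) • (v - u))
    have h5 : u + (κ : 𝕜) • (v - u) + ((1 - κ : ℝ) : 𝕜) • (v - u) = v := by
      rw [add_assoc, ← add_smul]
      simp
    rwa [h5, norm_smul, RCLike.norm_of_nonneg (sub_nonneg.2 hκ1)] at h4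
  rw [norm_sub_rev] at h
  nlinarith

lemma deficiencyTrivial_transfer [CompleteSpace H] {D : Submodule 𝕜 H} {A C : D →ₗ[𝕜] H}
    (hA : ∀ x y : D, ⟪A x, (y : H)⟫_𝕜 = ⟪(x : H), A y⟫_𝕜)
    (hC : ∀ x y : D, ⟪C x, (y : H)⟫_𝕜 = ⟪(x : H), C y⟫_𝕜) {a b : ℝ} (hb : 0 < b)
    (hb1 : b < 1) (h : ∀ x : D, ‖A x - C x‖ ≤ a * ‖(x : H)‖ + b * (‖A x‖ + ‖C x‖))
    (hdef : DeficiencyTrivial A (a / (2 * b))) : DeficiencyTrivial C (a / (2 * b)) := by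
  -- Steps of length `1 / n` are short enough as soon as `4 b ≤ n (1 - b)`.
  obtain ⟨n, hn⟩ := exists_nat_gt (4 * b / (1 - b))
  have hb' : 0 < 1 - b := by linarith
  have hn0 : (0 : ℝ) < n := lt_trans (by positivity) hn
  rw [div_lt_iff₀ hb'] at hn
  let T : ℝ → D →ₗ[𝕜] H := fun κ => A + (κ : 𝕜) • (C - A)
  have hTsymm : ∀ (κ : ℝ) (x y : D), ⟪T κ x, (y : H)⟫_𝕜 = ⟪(x : H), T κ y⟫_𝕜 := by
    intro κ x y
    simp only [T, LinearMap.add_apply, LinearMap.smul_apply, LinearMap.sub_apply, inner_add_left,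
      inner_add_right, inner_smul_left, inner_smul_right, inner_sub_left, inner_sub_right,
      RCLike.conj_ofReal, hA x y, hC x y]
  have key : ∀ k : ℕ, k ≤ n → DeficiencyTrivial (T (k / n)) (a / (2 * b)) := by
    intro k
    induction k with
    | zero => intro _; simpa [T] using hdef
    | succ k ih =>
      intro hk
      refine deficiencyTrivial_step (hTsymm _) (fun x => ?_) (ih (by omega))
      have hκ1 : (k : ℝ) / n ≤ 1 := by
        rw [div_le_one hn0]
        exact_mod_cast (by omega : k ≤ n)
      have hrel : (1 - b) * ‖C x - A x‖ ≤ a * ‖(x : H)‖ + 2 * b * ‖T (k / n) x‖ :=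
        relative_bound (𝕜 := 𝕜) hb (by positivity) hκ1 (h x)
      have hdiff : T ((k + 1 : ℕ) / n) x - T (k / n) x = ((1 / n : ℝ) : 𝕜) • (C x - A x) := by
        simp only [T, LinearMap.add_apply, LinearMap.smul_apply, LinearMap.sub_apply]
        rw [add_sub_add_left_eq_sub, ← sub_smul, ← RCLike.ofReal_sub]
        congr 2
        push_cast
        ring
      rw [hdiff, norm_smul, RCLike.norm_of_nonneg (by positivity)]
      set t := ‖T (k / n) x‖
      set s := ‖(x : H)‖
      set β := ‖C x - A x‖
      have hβ : 0 ≤ β := norm_nonneg _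
      have hlin : 1 / (n : ℝ) * β ≤ 1 / 2 * (t + a / (2 * b) * s) := by
        have e : 1 / 2 * (t + a / (2 * b) * s) = (a * s + 2 * b * t) / (4 * b) := by
          field_simp
          ring
        rw [e, le_div_iff₀ (by positivity), one_div_mul_eq_div, div_mul_eq_mul_div,
          div_le_iff₀ hn0]
        calc β * (4 * b) ≤ β * (n * (1 - b)) := by gcongr
          _ = ((1 - b) * β) * n := by ring
          _ ≤ (a * s + 2 * b * t) * n := by gcongr
      have h0 : 0 ≤ 1 / (n : ℝ) * β := by positivity
      nlinarith [sq_nonneg (t - a / (2 * b) * s), pow_le_pow_left₀ h0 hlin 2]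
  have hend := key n le_rfl
  rw [div_self hn0.ne'] at hend
  simpa [T] using hend

/-! ### Closedness -/

open Filter Topology in
/-- Closedness passes from `A` to `C`, because the inequality makes their graph norms equivalent. -/
lemma isClosed_transfer [CompleteSpace H] {D : Submodule 𝕜 H} {A C : D →ₗ[𝕜] H} {a b : ℝ}
    (hb : 0 < b) (hb1 : b < 1)
    (h : ∀ x : D, ‖A x - C x‖ ≤ a * ‖(x : H)‖ + b * (‖A x‖ + ‖C x‖))
    (hA : (LinearPMap.mk D A).IsClosed) : (LinearPMap.mk D C).IsClosed := by
  have hb' : 0 < 1 - b := by linarith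
  have hAC : ∀ x : D, (1 - b) * ‖C x - A x‖ ≤ a * ‖(x : H)‖ + 2 * b * ‖C x‖ := by
    intro x
    simpa using relative_bound (𝕜 := 𝕜) hb zero_le_one le_rfl (h x)
  have hCA : ∀ x : D, (1 - b) * ‖C x - A x‖ ≤ a * ‖(x : H)‖ + 2 * b * ‖A x‖ := by
    intro x
    simpa using relative_bound (𝕜 := 𝕜) hb le_rfl zero_le_one (h x)
  refine isClosed_of_closure_subset ?_
  rintro ⟨x, y⟩ hxy
  obtain ⟨z, hz, hlim⟩ := mem_closure_iff_seq_limit.1 hxy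
  choose w hw1 hw2 using fun n => (LinearPMap.mem_graph_iff _).1 (hz n)
  have hx : Tendsto (fun n => (w n : H)) atTop (𝓝 x) := by
    simpa only [hw1] using hlim.fst_nhds
  have hy : Tendsto (fun n => C (w n)) atTop (𝓝 y) := by
    have : ∀ n, C (w n) = (z n).2 := hw2
    simpa only [this] using hlim.snd_nhds
  have hcau : CauchySeq fun n => C (w n) - A (w n) := by
    have hxc := cauchySeq_iff_tendsto_dist_atTop_0.1 hx.cauchySeq
    have hyc := cauchySeq_iff_tendsto_dist_atTop_0.1 hy.cauchySeq
    rw [cauchySeq_iff_tendsto_dist_atTop_0]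
    have hlim0 := ((hxc.const_mul a).add (hyc.const_mul (2 * b))).const_mul (1 - b)⁻¹
    simp only [mul_zero, add_zero] at hlim0
    refine squeeze_zero (fun _ => dist_nonneg) (fun p => ?_) hlim0
    rw [le_inv_mul_iff₀ hb']
    have := hAC (w p.1 - w p.2)
    rw [_root_.map_sub, _root_.map_sub, sub_sub_sub_comm] at this
    simpa only [dist_eq_norm, AddSubgroupClass.coe_sub] using this
  obtain ⟨d, hd⟩ := cauchySeq_tendsto_of_complete hcau
  have hAw : Tendsto (fun n => A (w n)) atTop (𝓝 (y - d)) := by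
    simpa using hy.sub hd
  have hmem : (x, y - d) ∈ (LinearPMap.mk D A).graph :=
    hA.mem_of_tendsto (hx.prodMk_nhds hAw)
      (Eventually.of_forall fun n => LinearPMap.mem_graph (LinearPMap.mk D A) (w n))
  obtain ⟨x', hx', hAx⟩ := (LinearPMap.mem_graph_iff _).1 hmem
  change (x' : H) = x at hx'
  change A x' = y - d at hAx
  -- `w n → x'` in the graph norm of `A`, hence in that of `C`
  have hC0 : Tendsto (fun n => C (w n) - A (w n)) atTop (𝓝 (C x' - A x')) := by
    rw [tendsto_iff_dist_tendsto_zero]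
    have e1 := tendsto_iff_dist_tendsto_zero.1 (hx' ▸ hx)
    have e2 := tendsto_iff_dist_tendsto_zero.1 (hAx ▸ hAw)
    have hlim0 := ((e1.const_mul a).add (e2.const_mul (2 * b))).const_mul (1 - b)⁻¹
    simp only [mul_zero, add_zero] at hlim0
    refine squeeze_zero (fun _ => dist_nonneg) (fun n => ?_) hlim0
    rw [le_inv_mul_iff₀ hb']
    have := hCA (w n - x')
    rw [_root_.map_sub, _root_.map_sub, sub_sub_sub_comm] at this
    simpa only [dist_eq_norm, AddSubgroupClass.coe_sub] using this
  have hd' : d = C x' - A x' := tendsto_nhds_unique hd hC0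
  refine (LinearPMap.mem_graph_iff _).2 ⟨x', hx', ?_⟩
  change C x' = y
  rw [eq_sub_iff_add_eq, hd'] at hAx
  rw [← hAx]
  abel

/-! ### Conclusion -/

lemma selfAdjointOp_iff [CompleteSpace H] {T : H →ₗ.[𝕜] H} (hd : Dense (T.domain : Set H)) :
    T.IsSelfAdjointOp ↔ T.IsClosed ∧ T.IsEssSelfAdjointOp := by
  have hcl : T.IsClosed → T.closure = T := fun hc => LinearPMap.eq_of_eq_graph <| by
    rw [← hc.isClosable.graph_closure_eq_closure_graph]
    exact hc.submodule_topologicalClosure_eq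
  constructor
  · rintro ⟨_, hadj⟩
    have hc : T.IsClosed := by
      have := LinearPMap.adjoint_isClosed hd
      rwa [hadj] at this
    refine ⟨hc, hc.isClosable, ?_⟩
    rw [hcl hc]
    exact ⟨hd, hadj⟩
  · rintro ⟨hc, _, hess⟩
    rw [hcl hc] at hess
    exact hess

lemma ess_transfer [CompleteSpace H] {D : Submodule 𝕜 H} {A C : D →ₗ[𝕜] H}
    (hd : Dense (D : Set H)) (hA : (LinearPMap.mk D A).IsSymmetricOp)
    (hC : (LinearPMap.mk D C).IsSymmetricOp) {a b : ℝ} (ha : 0 < a) (hb : 0 < b)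
    (hb1 : b < 1) (h : ∀ x : D, ‖A x - C x‖ ≤ a * ‖(x : H)‖ + b * (‖A x‖ + ‖C x‖))
    (hess : (LinearPMap.mk D A).IsEssSelfAdjointOp) :
    (LinearPMap.mk D C).IsEssSelfAdjointOp := by
  have hl : 0 < a / (2 * b) := by positivity
  exact ess_of_deficiencyTrivial hC hd hl
    (deficiencyTrivial_transfer hA hC hb hb1 h (deficiencyTrivial_of_ess hess hl))

end Kato

/-- **Corollary (Kato).** Let `A, C` be symmetric operators in a Hilbert space `H` with
common dense domain `𝒟`, and suppose `‖(A−C) x‖ ≤ a‖x‖ + b(‖A x‖ + ‖C x‖)` on `𝒟` for some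
`a > 0` and `0 < b < 1`. Then `A` is selfadjoint (resp. essentially selfadjoint) iff `C` is
selfadjoint (resp. essentially selfadjoint). -/
theorem kato_simultaneous_selfadjoint {𝕜 H : Type*} [RCLike 𝕜]
    [NormedAddCommGroup H] [InnerProductSpace 𝕜 H] [CompleteSpace H]
    (A C : H →ₗ.[𝕜] H) (hAsymm : A.IsSymmetricOp) (hCsymm : C.IsSymmetricOp)
    (hdom : A.domain = C.domain) (hdense : Dense (A.domain : Set H))
    (hbound : ∃ a b : ℝ, 0 < a ∧ 0 < b ∧ b < 1 ∧ ∀ x : A.domain,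
      ‖(A - C) ⟨x.1, Submodule.mem_inf.mpr ⟨x.2, hdom.le x.2⟩⟩‖ ≤
        a * ‖(x : H)‖ + b * (‖A x‖ + ‖C ⟨x.1, hdom.le x.2⟩‖)) :
    (A.IsSelfAdjointOp ↔ C.IsSelfAdjointOp) ∧
      (A.IsEssSelfAdjointOp ↔ C.IsEssSelfAdjointOp) := by
  obtain ⟨a, b, ha, hb, hb1, h⟩ := hbound
  obtain ⟨D, A⟩ := A
  obtain ⟨D', C⟩ := C
  obtain rfl : D = D' := hdom
  have hAC : ∀ x : D, ‖A x - C x‖ ≤ a * ‖(x : H)‖ + b * (‖A x‖ + ‖C x‖) := h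
  have hCA : ∀ x : D, ‖C x - A x‖ ≤ a * ‖(x : H)‖ + b * (‖C x‖ + ‖A x‖) := fun x => by
    rw [norm_sub_rev, add_comm ‖C x‖]
    exact hAC x
  have hcl : (LinearPMap.mk D A).IsClosed ↔ (LinearPMap.mk D C).IsClosed :=
    ⟨Kato.isClosed_transfer hb hb1 hAC, Kato.isClosed_transfer hb hb1 hCA⟩
  have hess : (LinearPMap.mk D A).IsEssSelfAdjointOp ↔ (LinearPMap.mk D C).IsEssSelfAdjointOp :=
    ⟨Kato.ess_transfer hdense hAsymm hCsymm ha hb hb1 hAC,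
      Kato.ess_transfer hdense hCsymm hAsymm ha hb hb1 hCA⟩
  refine ⟨?_, hess⟩
  rw [Kato.selfAdjointOp_iff hdense, Kato.selfAdjointOp_iff (T := LinearPMap.mk D C) hdense,
    hcl, hess]
end

section
/- Let A and B be symmetric linear operators in a real or complex Hilbert space H with 𝒟 := dom A ⊆ dom B. Assume 𝒟 ⊆ dom(AB) ∩ dom(BA), that A B x = B A x for all x ∈ 𝒟, and that either (a) A is selfadjoint, or (b) A is essentially selfadjoint and B is A-bounded. Then both B and A + B, restricted to 𝒟, are essentially selfadjoint. -/
open LinearPMap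

/-- The product (composition) `A ∘ B` of two partially defined linear operators,
with domain `{x ∈ dom B : B x ∈ dom A}`, defined via its graph. -/
noncomputable def LinearPMap.pcomp {R E F G : Type*} [Ring R] [AddCommGroup E] [Module R E]
    [AddCommGroup F] [Module R F] [AddCommGroup G] [Module R G]
    (A : F →ₗ.[R] G) (B : E →ₗ.[R] F) : E →ₗ.[R] G :=
  Submodule.toLinearPMap
    { carrier := {p : E × G | ∃ y : F, (p.1, y) ∈ B.graph ∧ (y, p.2) ∈ A.graph}
      add_mem' := fun ⟨y, hy1, hy2⟩ ⟨z, hz1, hz2⟩ =>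
        ⟨y + z, B.graph.add_mem hy1 hz1, A.graph.add_mem hy2 hz2⟩
      zero_mem' := ⟨0, B.graph.zero_mem, A.graph.zero_mem⟩
      smul_mem' := fun c _ ⟨y, hy1, hy2⟩ =>
        ⟨c • y, B.graph.smul_mem c hy1, A.graph.smul_mem c hy2⟩ }

/-!
The joint graph of a commuting pair is studied through the bounded operators
`J = (1 + δ² Ā²)⁻¹`, where `Ā` is the closure of `A`. Working with `Ā²` instead of the resolvents
`(Ā ± i δ)⁻¹` treats real and complex scalars alike.

Let `C` be `B` or `A + B` on `dom A`. Then `C` is symmetric, satisfies the weak commutation relation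
`⟪C x, A y⟫ = ⟪A x, C y⟫`, and is `A`-bounded whenever `B` is. Take `K` to be the joint graph
`{(x, A x, C x)}` when `A` is selfadjoint, and its closure otherwise; in the second case relative
boundedness shows that `K` projects onto the whole graph of `Ā`. In both cases
`IsCommutingGraph K` holds, and write `T`, `S` for the two operators encoded by `K`.

* `J` is everywhere defined (`IsCommutingGraph.exists_isRes`), a contraction (`IsRes.norm_le`), and
  `J → 1` strongly as `δ → 0` (`IsCommutingGraph.exists_close`).
* `J` maps into `dom T`, and weak commutation together with `T = T*` gives `S J y = J S* y` for all
  `y ∈ dom S*` (`IsCommutingGraph.res_comm`).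

Hence `(J y, J S* y)` lies in the graph of `S` and converges to `(y, S* y)`
(`IsCommutingGraph.mem_closure`): the graph of `C*` is contained in the closure of that of `C`,
which for a symmetric densely defined `C` means essential selfadjointness
(`isEssSelfAdjointOp_of_graph`).
-/

open scoped InnerProductSpace

section Helpers

variable {𝕜 H : Type*} [RCLike 𝕜] [NormedAddCommGroup H] [InnerProductSpace 𝕜 H]

/-! ### Criterion for essential selfadjointness -/

/-- A continuous identity in two variables extends from a submodule to its closure. -/
theorem eq_on_topologicalClosure {E : Type*} [NormedAddCommGroup E] [Module 𝕜 E]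
    [ContinuousConstSMul 𝕜 E] (S : Submodule 𝕜 E) (f g : E → E → 𝕜)
    (hf : Continuous fun z : E × E => f z.1 z.2) (hg : Continuous fun z : E × E => g z.1 z.2)
    (h : ∀ p ∈ S, ∀ q ∈ S, f p q = g p q) :
    ∀ p ∈ S.topologicalClosure, ∀ q ∈ S.topologicalClosure, f p q = g p q := by
  intro p hp q hq
  have hpq : (p, q) ∈ closure ((S : Set E) ×ˢ (S : Set E)) := by
    rw [closure_prod_eq]; exact ⟨hp, hq⟩
  exact closure_minimal (fun z hz => h z.1 hz.1 z.2 hz.2) (isClosed_eq hf hg) hpq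

/-- A densely defined symmetric operator is essentially selfadjoint if the graph of its adjoint is
contained in the closure of its graph. -/
theorem isEssSelfAdjointOp_of_graph [CompleteSpace H] (C : H →ₗ.[𝕜] H)
    (hd : Dense (C.domain : Set H))
    (hs : ∀ p ∈ C.graph, ∀ q ∈ C.graph, ⟪p.2, q.1⟫_𝕜 = ⟪p.1, q.2⟫_𝕜)
    (hmax : ∀ y w : H, (∀ p ∈ C.graph, ⟪w, p.1⟫_𝕜 = ⟪y, p.2⟫_𝕜) →
      (y, w) ∈ C.graph.topologicalClosure) :
    C.IsEssSelfAdjointOp := by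
  have hfa : C.IsFormalAdjoint C := fun x y => hs _ (C.mem_graph x) _ (C.mem_graph y)
  have hcl : C.IsClosable :=
    (LinearPMap.adjoint_isClosed hd).isClosable.leIsClosable (hfa.le_adjoint hd)
  have hd' : Dense (C.closure.domain : Set H) := hd.mono C.le_closure.1
  refine ⟨hcl, hd', ?_⟩
  apply LinearPMap.eq_of_eq_graph
  rw [LinearPMap.adjoint_graph_eq_graph_adjoint hd', ← hcl.graph_closure_eq_closure_graph]
  ext ⟨y, w⟩
  rw [Submodule.mem_adjoint_iff]
  constructor
  · intro h
    apply hmax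
    intro p hp
    have := h p.1 p.2 (C.graph.le_topologicalClosure hp)
    rw [← inner_conj_symm, ← inner_conj_symm y, sub_eq_zero.1 this]
  · intro h a b hab
    rw [sub_eq_zero]
    exact eq_on_topologicalClosure C.graph (fun p q => ⟪p.2, q.1⟫_𝕜) (fun p q => ⟪p.1, q.2⟫_𝕜)
      (by fun_prop) (by fun_prop) hs _ hab _ h

/-! ### The operators `(1 + δ² T²)⁻¹` -/

/-- Joint graph of a pair of commuting symmetric operators `T`, `S`: the elements of `K` are
triples `(x, T x, S x)`. The condition `comm` is the weak form of `T S = S T`, and `max` says that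
`T` is selfadjoint. -/
structure IsCommutingGraph (K : Submodule 𝕜 (H × H × H)) : Prop where
  dense : Dense {x : H | ∃ p ∈ K, p.1 = x}
  symm₁ : ∀ p ∈ K, ∀ q ∈ K, ⟪p.2.1, q.1⟫_𝕜 = ⟪p.1, q.2.1⟫_𝕜
  symm₂ : ∀ p ∈ K, ∀ q ∈ K, ⟪p.2.2, q.1⟫_𝕜 = ⟪p.1, q.2.2⟫_𝕜
  comm : ∀ p ∈ K, ∀ q ∈ K, ⟪p.2.2, q.2.1⟫_𝕜 = ⟪p.2.1, q.2.2⟫_𝕜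
  max : ∀ y w : H, (∀ p ∈ K, ⟪w, p.1⟫_𝕜 = ⟪y, p.2.1⟫_𝕜) → ∃ b, (y, w, b) ∈ K

/-- For a joint graph `K` of `T` and `S`: `p = (u, T u, S u)` and `q = (T u, T² u, S T u)` with
`u + δ² T² u = y`, so that `u = (1 + δ² T²)⁻¹ y`. -/
structure IsRes (K : Submodule 𝕜 (H × H × H)) (δ : ℝ) (y : H) (p q : H × H × H) : Prop where
  hp : p ∈ K
  hq : q ∈ K
  link : q.1 = p.2.1
  eq : y = p.1 + ((δ : 𝕜) ^ 2) • q.2.1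

variable {K : Submodule 𝕜 (H × H × H)} {δ : ℝ} {y y' : H} {p q p' q' : H × H × H}

theorem IsRes.sub (h : IsRes K δ y p q) (h' : IsRes K δ y' p' q') :
    IsRes K δ (y - y') (p - p') (q - q') := by
  refine ⟨K.sub_mem h.hp h'.hp, K.sub_mem h.hq h'.hq, ?_, ?_⟩
  · simp [h.link, h'.link]
  · rw [h.eq, h'.eq]
    simp only [Prod.fst_sub, Prod.snd_sub, smul_sub]
    abel

/-- `(1 + δ² T²)⁻¹` is a contraction. -/
theorem IsRes.norm_le (hK : IsCommutingGraph K) (h : IsRes K δ y p q) : ‖p.1‖ ≤ ‖y‖ := by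
  have h1 : ⟪y, p.1⟫_𝕜 = ((‖p.1‖ ^ 2 + δ ^ 2 * ‖q.1‖ ^ 2 : ℝ) : 𝕜) := by
    rw [h.eq, inner_add_left, inner_smul_left, hK.symm₁ q h.hq p h.hp, ← h.link,
      inner_self_eq_norm_sq_to_K, inner_self_eq_norm_sq_to_K]
    simp
  have h2 := norm_inner_le_norm (𝕜 := 𝕜) y p.1
  rw [h1, RCLike.norm_ofReal] at h2
  have h3 := (le_abs_self _).trans h2
  by_contra! hc
  have : 0 ≤ δ ^ 2 * ‖q.1‖ ^ 2 := by positivity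
  nlinarith [norm_nonneg p.1, norm_nonneg y]

/-- On `dom T` the resolvents `(1 + δ² T²)⁻¹` converge to the identity at rate `δ`. -/
theorem IsRes.norm_sub_le (hK : IsCommutingGraph K) (hδ : 0 < δ) {r : H × H × H} (hr : r ∈ K)
    (h : IsRes K δ r.1 p q) : ‖r.1 - p.1‖ ≤ δ * ‖r.2.1‖ := by
  have h0 : r.1 - p.1 = ((δ : 𝕜) ^ 2) • q.2.1 := sub_eq_iff_eq_add'.2 h.eq
  have h1 : ((‖r.1 - p.1‖ ^ 2 + δ ^ 2 * ‖q.1‖ ^ 2 : ℝ) : 𝕜) = (δ : 𝕜) ^ 2 * ⟪q.1, r.2.1⟫_𝕜 := by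
    have : ⟪r.1 - p.1, r.1 - p.1⟫_𝕜 = (δ : 𝕜) ^ 2 * (⟪q.1, r.2.1⟫_𝕜 - ⟪q.1, q.1⟫_𝕜) := by
      nth_rewrite 1 [h0]
      rw [inner_smul_left, inner_sub_right, hK.symm₁ q h.hq r hr, hK.symm₁ q h.hq p h.hp, ← h.link]
      simp
    rw [inner_self_eq_norm_sq_to_K, inner_self_eq_norm_sq_to_K] at this
    push_cast
    rw [this]; ring
  have h2 : ‖r.1 - p.1‖ ^ 2 + δ ^ 2 * ‖q.1‖ ^ 2 ≤ δ ^ 2 * (‖q.1‖ * ‖r.2.1‖) := by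
    have := congrArg norm h1
    rw [RCLike.norm_ofReal, norm_mul, norm_pow, RCLike.norm_ofReal, sq_abs] at this
    refine (le_abs_self _).trans (this.le.trans ?_)
    gcongr
    exact norm_inner_le_norm _ _
  refine (sq_le_sq₀ (norm_nonneg _) (by positivity)).1 ?_
  nlinarith [sq_nonneg (δ * (‖q.1‖ - ‖r.2.1‖)), sq_nonneg (δ * ‖q.1‖), sq_nonneg (δ * ‖r.2.1‖)]

/-- `(1 + δ² T²)⁻¹ → 1` strongly as `δ → 0`. -/
theorem IsCommutingGraph.exists_close (hK : IsCommutingGraph K)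
    (hres : ∀ δ : ℝ, 0 < δ → ∀ y : H, ∃ p q, IsRes K δ y p q) (y : H) {η : ℝ} (hη : 0 < η) :
    ∃ δ₀ > 0, ∀ δ, 0 < δ → δ ≤ δ₀ → ∀ p q, IsRes K δ y p q → ‖y - p.1‖ < η := by
  obtain ⟨_, ⟨r, hr, rfl⟩, hyr⟩ := Metric.mem_closure_iff.1 (hK.dense y) (η / 3) (by positivity)
  rw [dist_eq_norm] at hyr
  refine ⟨η / (3 * (‖r.2.1‖ + 1)), by positivity, fun δ hδ hle p q h => ?_⟩
  obtain ⟨p', q', h'⟩ := hres δ hδ r.1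
  have h1 := h'.norm_sub_le hK hδ hr
  have h2 := (h.sub h').norm_le hK
  rw [le_div_iff₀ (by positivity)] at hle
  have h3 : y - p.1 = (y - r.1) + (r.1 - p'.1) - (p - p').1 := by
    simp only [Prod.fst_sub]; abel
  have h4 : ‖y - p.1‖ ≤ ‖y - r.1‖ + ‖r.1 - p'.1‖ + ‖(p - p').1‖ := by
    rw [h3]; exact (norm_sub_le _ _).trans (by gcongr; exact norm_add_le _ _)
  nlinarith

/-- `1 + δ² T²` is onto: decompose `(y, 0)` orthogonally along the graph of `δ T`. -/
theorem IsCommutingGraph.exists_isRes [CompleteSpace H] (hK : IsCommutingGraph K) {δ : ℝ}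
    (hδ : 0 < δ) (y : H) : ∃ p q, IsRes K δ y p q := by
  have hδ' : (δ : 𝕜) ≠ 0 := by exact_mod_cast hδ.ne'
  let L : (H × H × H) →ₗ[𝕜] WithLp 2 (H × H) :=
    (WithLp.linearEquiv 2 𝕜 (H × H)).symm.toLinearMap ∘ₗ
      (LinearMap.prod ((δ : 𝕜) • (LinearMap.fst 𝕜 H H ∘ₗ LinearMap.snd 𝕜 H (H × H)))
        (-LinearMap.fst 𝕜 H (H × H)))
  have hL1 : ∀ p, (L p).fst = (δ : 𝕜) • p.2.1 := fun p => rfl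
  have hL2 : ∀ p, (L p).snd = -p.1 := fun p => rfl
  -- the orthogonal complement of `U` is the graph of `δ T`
  let U : Submodule 𝕜 (WithLp 2 (H × H)) := K.map L
  have hU : ∀ z, z ∈ Uᗮ ↔ ∀ r ∈ K, ⟪z.snd, r.1⟫_𝕜 = ⟪(δ : 𝕜) • z.fst, r.2.1⟫_𝕜 := by
    intro z
    rw [Submodule.mem_orthogonal']
    constructor
    · intro h r hr
      have := h _ (Submodule.mem_map_of_mem hr)
      rw [WithLp.prod_inner_apply] at this
      change ⟪z.fst, (L r).fst⟫_𝕜 + ⟪z.snd, (L r).snd⟫_𝕜 = 0 at this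
      rw [hL1, hL2, inner_smul_right, inner_neg_right, add_neg_eq_zero] at this
      rw [inner_smul_left, RCLike.conj_ofReal, this]
    · rintro h _ ⟨r, hr, rfl⟩
      rw [WithLp.prod_inner_apply]
      change ⟪z.fst, (L r).fst⟫_𝕜 + ⟪z.snd, (L r).snd⟫_𝕜 = 0
      rw [hL1, hL2, inner_smul_right, inner_neg_right, h r hr, inner_smul_left, RCLike.conj_ofReal,
        add_neg_cancel]
  obtain ⟨g, hg, h, hh, hgh⟩ := Uᗮ.exists_add_mem_mem_orthogonal (WithLp.toLp 2 (y, (0 : H)))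
  have e1 : y = g.fst + h.fst := congrArg (fun z : WithLp 2 (H × H) => z.fst) hgh
  have e2 : 0 = g.snd + h.snd := congrArg (fun z : WithLp 2 (H × H) => z.snd) hgh
  obtain ⟨b, hb⟩ := hK.max _ _ ((hU g).1 hg)
  have hp := K.smul_mem ((δ : 𝕜)⁻¹) hb
  have hq : ∀ r ∈ K, ⟪h.fst, r.1⟫_𝕜 = ⟪(δ : 𝕜) • g.snd, r.2.1⟫_𝕜 := by
    intro r hr
    have hmem : WithLp.toLp 2 (r.1, (δ : 𝕜) • r.2.1) ∈ Uᗮ := by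
      rw [hU]
      intro s hs
      change ⟪(δ : 𝕜) • r.2.1, s.1⟫_𝕜 = ⟪(δ : 𝕜) • r.1, s.2.1⟫_𝕜
      rw [inner_smul_left, inner_smul_left, hK.symm₁ r hr s hs]
    have := (Submodule.mem_orthogonal' _ _).1 hh _ hmem
    rw [WithLp.prod_inner_apply] at this
    change ⟪h.fst, r.1⟫_𝕜 + ⟪h.snd, (δ : 𝕜) • r.2.1⟫_𝕜 = 0 at this
    rw [show h.snd = -g.snd from (neg_eq_of_add_eq_zero_right e2.symm).symm, inner_neg_left,
      inner_smul_right, add_neg_eq_zero] at this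
    rw [this, inner_smul_left, RCLike.conj_ofReal]
  obtain ⟨c, hc⟩ := hK.max _ _ hq
  have hq' := K.smul_mem (((δ : 𝕜) ^ 2)⁻¹) hc
  refine ⟨_, _, hp, hq', ?_, ?_⟩
  · simp only [Prod.smul_mk, smul_smul]
    congr 1
    field_simp
  · simp only [Prod.smul_mk, smul_smul]
    rw [inv_mul_cancel₀ hδ', mul_inv_cancel₀ (pow_ne_zero 2 hδ'), one_smul, one_smul]
    exact e1

/-! ### Commutation and approximation -/

/-- Weak commutation is strong commutation on `dom T²`: with `p = (u, T u, S u)` and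
`q = (T u, T² u, S T u)`, it says that `S u ∈ dom T` and `T S u = S T u`. -/
theorem IsCommutingGraph.comm_mem (hK : IsCommutingGraph K) (hp : p ∈ K) (hq : q ∈ K)
    (h : q.1 = p.2.1) : ∃ b, (p.2.2, q.2.2, b) ∈ K := by
  apply hK.max
  intro r hr
  rw [hK.symm₂ q hq r hr, h, hK.comm p hp r hr]

/-- If `(y, z)` lies in the graph of `S*`, then `S J y = J z` for `J = (1 + δ² T²)⁻¹`. -/
theorem IsCommutingGraph.res_comm [CompleteSpace H] (hK : IsCommutingGraph K) (hδ : 0 < δ) {z : H}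
    (hyz : ∀ r ∈ K, ⟪z, r.1⟫_𝕜 = ⟪y, r.2.2⟫_𝕜)
    (h : IsRes K δ y p q) (h' : IsRes K δ z p' q') : p.2.2 = p'.1 := by
  have hδ' : ((δ : 𝕜) ^ 2) ≠ 0 := pow_ne_zero 2 (by exact_mod_cast hδ.ne')
  refine hK.dense.eq_of_inner_left 𝕜 ?_
  rintro _ ⟨x, hx, rfl⟩
  -- `s = (J x, T J x, S J x)`, `t = (T J x, T² J x, S T J x)`, and `T² J x = (x - J x) / δ²` lies
  -- in `dom T` again
  obtain ⟨s, t, hst⟩ := hK.exists_isRes hδ x.1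
  have hr := K.smul_mem (((δ : 𝕜) ^ 2)⁻¹) (K.sub_mem hx hst.hp)
  set r := (((δ : 𝕜) ^ 2)⁻¹) • (x - s) with hrdef
  have hr1 : r.1 = t.2.1 := by
    rw [hrdef, Prod.smul_fst, Prod.fst_sub, hst.eq, add_sub_cancel_left, smul_smul,
      inv_mul_cancel₀ hδ', one_smul]
  have hxr : x = s + ((δ : 𝕜) ^ 2) • r := by
    rw [hrdef, smul_smul, mul_inv_cancel₀ hδ', one_smul, add_sub_cancel]
  obtain ⟨b, hb⟩ := hK.comm_mem hst.hp hst.hq hst.link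
  obtain ⟨c, hc⟩ := hK.comm_mem hst.hq hr hr1
  have e1 : ⟪p.1, r.2.2⟫_𝕜 = ⟪q.2.1, s.2.2⟫_𝕜 := by
    rw [← hK.symm₁ p h.hp _ hc, ← h.link, ← hK.symm₁ q h.hq _ hb]
  have e2 : ⟪q'.2.1, s.1⟫_𝕜 = ⟪p'.1, r.1⟫_𝕜 := by
    rw [hK.symm₁ q' h'.hq s hst.hp, h'.link, ← hst.link, hK.symm₁ p' h'.hp t hst.hq, hr1]
  calc ⟪p.2.2, x.1⟫_𝕜 = ⟪p.1, x.2.2⟫_𝕜 := hK.symm₂ p h.hp x hx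
    _ = ⟪p.1, s.2.2⟫_𝕜 + (δ : 𝕜) ^ 2 * ⟪p.1, r.2.2⟫_𝕜 := by
      rw [hxr]; simp [inner_add_right, inner_smul_right]
    _ = ⟪y, s.2.2⟫_𝕜 := by
      rw [e1, h.eq, inner_add_left, inner_smul_left]; simp
    _ = ⟪z, s.1⟫_𝕜 := (hyz s hst.hp).symm
    _ = ⟪p'.1, s.1⟫_𝕜 + (δ : 𝕜) ^ 2 * ⟪p'.1, r.1⟫_𝕜 := by
      rw [← e2, h'.eq, inner_add_left, inner_smul_left]; simp
    _ = ⟪p'.1, x.1⟫_𝕜 := by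
      rw [hxr]; simp [inner_add_right, inner_smul_right]

/-- `S*` is contained in the closure of `S`: approximate `(y, z)` by `(J y, J z) = (J y, S J y)`. -/
theorem IsCommutingGraph.mem_closure [CompleteSpace H] (hK : IsCommutingGraph K) {y z : H}
    (hyz : ∀ r ∈ K, ⟪z, r.1⟫_𝕜 = ⟪y, r.2.2⟫_𝕜) :
    (y, z) ∈ closure {g : H × H | ∃ p ∈ K, (p.1, p.2.2) = g} := by
  rw [Metric.mem_closure_iff]
  intro η hη
  have hres : ∀ δ : ℝ, 0 < δ → ∀ y : H, ∃ p q, IsRes K δ y p q := fun δ hδ y => hK.exists_isRes hδ y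
  obtain ⟨d₁, hd₁, h₁⟩ := hK.exists_close hres y hη
  obtain ⟨d₂, hd₂, h₂⟩ := hK.exists_close hres z hη
  have hδ : 0 < min d₁ d₂ := lt_min hd₁ hd₂
  obtain ⟨p, q, h⟩ := hres _ hδ y
  obtain ⟨p', q', h'⟩ := hres _ hδ z
  refine ⟨_, ⟨p, h.hp, rfl⟩, ?_⟩
  rw [Prod.dist_eq, max_lt_iff, hK.res_comm hδ hyz h h', dist_eq_norm, dist_eq_norm]
  exact ⟨h₁ _ hδ (min_le_left _ _) _ _ h, h₂ _ hδ (min_le_right _ _) _ _ h'⟩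

/-! ### Passage to the closure of the joint graph -/

/-- Essential selfadjointness of an operator `C` with domain `dom A`, given there by the linear map
`B`, when `B` is symmetric and commutes weakly with `A`. The commuting graph is the joint graph of
`A` and `B` if `A` is selfadjoint, and the closure of that joint graph if `A` is only essentially
selfadjoint and `B` is `A`-bounded. -/
theorem isEssSelfAdjointOp_of_weak_comm [CompleteSpace H] (A C : H →ₗ.[𝕜] H)
    (hAsymm : A.IsSymmetricOp) (hdom : C.domain = A.domain)
    (B : A.domain →ₗ[𝕜] H) (hCB : ∀ (x : C.domain) (y : A.domain), (x : H) = y → C x = B y)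
    (hBsymm : ∀ x y : A.domain, ⟪B x, (y : H)⟫_𝕜 = ⟪(x : H), B y⟫_𝕜)
    (hcomm : ∀ x y : A.domain, ⟪B x, A y⟫_𝕜 = ⟪A x, B y⟫_𝕜)
    (hcase : A.IsSelfAdjointOp ∨
      (A.IsEssSelfAdjointOp ∧ ∃ α β : ℝ, 0 ≤ α ∧ 0 ≤ β ∧ ∀ x : A.domain,
        ‖B x‖ ≤ α * ‖A x‖ + β * ‖(x : H)‖)) :
    C.IsEssSelfAdjointOp := by
  let K₀ : Submodule 𝕜 (H × H × H) :=
    LinearMap.range (A.domain.subtype.prod (A.toFun.prod B))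
  have hmem : ∀ x : A.domain, ((x : H), A x, B x) ∈ K₀ := fun x => ⟨x, rfl⟩
  have hC : ∀ x : A.domain, ((x : H), B x) ∈ C.graph := by
    intro x
    rw [LinearPMap.mem_graph_iff]
    exact ⟨⟨x, by rw [hdom]; exact x.2⟩, rfl, hCB _ _ rfl⟩
  have hC' : ∀ g ∈ C.graph, ∃ x : A.domain, ((x : H), B x) = g := by
    intro g hg
    obtain ⟨x, h1, h2⟩ := (LinearPMap.mem_graph_iff C).1 hg
    exact ⟨⟨x, hdom ▸ x.2⟩, Prod.ext h1 ((hCB _ _ rfl).symm.trans h2)⟩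
  have s₁ := eq_on_topologicalClosure K₀ (fun p q => ⟪p.2.1, q.1⟫_𝕜) (fun p q => ⟪p.1, q.2.1⟫_𝕜)
    (by fun_prop) (by fun_prop) (by rintro _ ⟨x, rfl⟩ _ ⟨y, rfl⟩; exact hAsymm x y)
  have s₂ := eq_on_topologicalClosure K₀ (fun p q => ⟪p.2.2, q.1⟫_𝕜) (fun p q => ⟪p.1, q.2.2⟫_𝕜)
    (by fun_prop) (by fun_prop) (by rintro _ ⟨x, rfl⟩ _ ⟨y, rfl⟩; exact hBsymm x y)
  have s₃ := eq_on_topologicalClosure K₀ (fun p q => ⟪p.2.2, q.2.1⟫_𝕜)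
    (fun p q => ⟪p.2.1, q.2.2⟫_𝕜)
    (by fun_prop) (by fun_prop) (by rintro _ ⟨x, rfl⟩ _ ⟨y, rfl⟩; exact hcomm x y)
  have hle := K₀.le_topologicalClosure
  have hdense : Dense (A.domain : Set H) := by
    rcases hcase with h | ⟨⟨hcl, hd, _⟩, _⟩
    · exact h.1
    · refine dense_closure.1 (hd.mono ?_)
      intro x hx
      obtain ⟨a, ha⟩ := LinearPMap.mem_domain_iff.1 hx
      rw [← hcl.graph_closure_eq_closure_graph] at ha
      refine map_mem_closure continuous_fst ha ?_
      intro g hg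
      exact LinearPMap.mem_domain_of_mem_graph (y := g.2) hg
  have hKd : ∀ K : Submodule 𝕜 (H × H × H), K₀ ≤ K → Dense {x : H | ∃ p ∈ K, p.1 = x} :=
    fun K hK => hdense.mono fun x hx => ⟨_, hK (hmem ⟨x, hx⟩), rfl⟩
  obtain ⟨K, h0K, hKcl, hK⟩ :
      ∃ K, K₀ ≤ K ∧ K ≤ K₀.topologicalClosure ∧ IsCommutingGraph K := by
    rcases hcase with h | ⟨⟨hcl, hd, hadj⟩, α, β, hα, hβ, hbound⟩
    · refine ⟨K₀, le_rfl, hle, hKd _ le_rfl, fun p hp q hq => s₁ p (hle hp) q (hle hq),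
        fun p hp q hq => s₂ p (hle hp) q (hle hq), fun p hp q hq => s₃ p (hle hp) q (hle hq), ?_⟩
      intro y w hyw
      have : (y, w) ∈ A.graph := by
        rw [← h.2, LinearPMap.adjoint_graph_eq_graph_adjoint hdense, Submodule.mem_adjoint_iff]
        intro a b hab
        obtain ⟨x, rfl, rfl⟩ := (LinearPMap.mem_graph_iff A).1 hab
        rw [sub_eq_zero, ← inner_conj_symm, ← inner_conj_symm (x : H)]
        exact congrArg _ (hyw _ (hmem x)).symm
      obtain ⟨x, h1, h2⟩ := (LinearPMap.mem_graph_iff A).1 this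
      obtain rfl : (x : H) = y := h1
      obtain rfl : A x = w := h2
      exact ⟨_, hmem x⟩
    · refine ⟨_, hle, le_rfl, hKd _ hle, s₁, s₂, s₃, ?_⟩
      intro y w hyw
      have hyw' : (y, w) ∈ A.graph.topologicalClosure := by
        rw [hcl.graph_closure_eq_closure_graph, ← hadj,
          LinearPMap.adjoint_graph_eq_graph_adjoint hd, Submodule.mem_adjoint_iff,
          ← hcl.graph_closure_eq_closure_graph]
        intro a b hab
        refine closure_minimal (s := (A.graph : Set (H × H)))
          (t := {g : H × H | ⟪g.2, y⟫_𝕜 - ⟪g.1, w⟫_𝕜 = 0}) ?_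
          (isClosed_eq (by fun_prop) (by fun_prop)) hab
        intro g hg
        obtain ⟨x, h1, h2⟩ := (LinearPMap.mem_graph_iff A).1 hg
        change ⟪g.2, y⟫_𝕜 - ⟪g.1, w⟫_𝕜 = 0
        rw [← h1, ← h2, sub_eq_zero, ← inner_conj_symm, ← inner_conj_symm (x : H)]
        exact congrArg _ (hyw _ (hle (hmem x))).symm
      -- graph-norm approximants `x n` of `y`; relative boundedness makes `B (x n)` convergent
      obtain ⟨g, hgA, hg⟩ := mem_closure_iff_seq_limit.1 hyw'
      choose x hx1 hx2 using fun n => (LinearPMap.mem_graph_iff A).1 (hgA n)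
      have t1 : Filter.Tendsto (fun n => (x n : H)) Filter.atTop (nhds y) := by
        simp only [hx1]
        exact (continuous_fst.tendsto _).comp hg
      have t2 : Filter.Tendsto (fun n => A (x n)) Filter.atTop (nhds w) := by
        simp only [hx2]
        exact (continuous_snd.tendsto _).comp hg
      have hc : CauchySeq fun n => B (x n) := by
        rw [Metric.cauchySeq_iff]
        intro ε hε
        obtain ⟨N, hN⟩ := Metric.cauchySeq_iff.1 t1.cauchySeq (ε / (α + β + 1)) (by positivity)
        obtain ⟨M, hM⟩ := Metric.cauchySeq_iff.1 t2.cauchySeq (ε / (α + β + 1)) (by positivity)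
        refine ⟨max N M, fun m hm n hn => ?_⟩
        have h1 := hN m (le_of_max_le_left hm) n (le_of_max_le_left hn)
        have h2 := hM m (le_of_max_le_right hm) n (le_of_max_le_right hn)
        rw [dist_eq_norm] at h1 h2 ⊢
        have h3 := hbound (x m - x n)
        rw [LinearMap.map_sub, LinearPMap.map_sub, Submodule.coe_sub] at h3
        have h4 : (α + β + 1) * (ε / (α + β + 1)) = ε := by field_simp
        have h5 : 0 < ε / (α + β + 1) := by positivity
        nlinarith
      obtain ⟨b, hb⟩ := cauchySeq_tendsto_of_complete hc
      exact ⟨b, mem_closure_of_tendsto (t1.prodMk_nhds (t2.prodMk_nhds hb))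
        (Filter.Eventually.of_forall fun n => hmem (x n))⟩
  refine isEssSelfAdjointOp_of_graph C (by rw [hdom]; exact hdense) ?_ ?_
  · intro p hp q hq
    obtain ⟨x, rfl⟩ := hC' p hp
    obtain ⟨y, rfl⟩ := hC' q hq
    exact hBsymm x y
  · intro y w hyw
    have hcl : ∀ p ∈ K₀.topologicalClosure, (p.1, p.2.2) ∈ C.graph.topologicalClosure := by
      intro p hp
      refine map_mem_closure (f := fun p : H × H × H => (p.1, p.2.2)) (by fun_prop) hp ?_
      rintro _ ⟨x, rfl⟩
      exact hC x
    refine closure_minimal ?_ C.graph.isClosed_topologicalClosure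
      (hK.mem_closure (y := y) (z := w) ?_)
    · rintro _ ⟨p, hp, rfl⟩
      exact hcl p (hKcl hp)
    · intro r hr
      refine closure_minimal (s := (K₀ : Set (H × H × H)))
        (t := {r | ⟪w, r.1⟫_𝕜 = ⟪y, r.2.2⟫_𝕜}) ?_
        (isClosed_eq (by fun_prop) (by fun_prop)) (hKcl hr)
      rintro _ ⟨x, rfl⟩
      exact hyw _ (hC x)

end Helpers

/-- The pointwise description of the product: `(A B) x = A (B x)` with `x ∈ dom B` and
`B x ∈ dom A`. The relation defining it is single-valued, so no junk value enters. -/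
theorem pcomp_graph {𝕜 E F G : Type*} [Ring 𝕜] [AddCommGroup E] [Module 𝕜 E]
    [AddCommGroup F] [Module 𝕜 F] [AddCommGroup G] [Module 𝕜 G]
    (A : F →ₗ.[𝕜] G) (B : E →ₗ.[𝕜] F) (x : (A.pcomp B).domain) :
    ∃ (hx : (x : E) ∈ B.domain) (hy : B ⟨x, hx⟩ ∈ A.domain), A.pcomp B x = A ⟨B ⟨x, hx⟩, hy⟩ := by
  have h : ((x : E), A.pcomp B x) ∈
      {p : E × G | ∃ y : F, (p.1, y) ∈ B.graph ∧ (y, p.2) ∈ A.graph} := by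
    refine Submodule.mem_graph_toLinearPMap ?_ x
    rintro ⟨a, c⟩ ⟨b, h1, h2⟩ h0
    exact A.graph_fst_eq_zero_snd h2 (B.graph_fst_eq_zero_snd h1 h0)
  obtain ⟨y, h1, h2⟩ := h
  obtain ⟨x', e1, e2⟩ := (LinearPMap.mem_graph_iff B).1 h1
  obtain ⟨y', e3, e4⟩ := (LinearPMap.mem_graph_iff A).1 h2
  simp only at e1 e2 e3 e4
  have hx : (x : E) ∈ B.domain := e1 ▸ x'.2
  have hx' : (⟨x, hx⟩ : B.domain) = x' := Subtype.ext e1.symm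
  have hy : B ⟨x, hx⟩ ∈ A.domain := by rw [hx', e2, ← e3]; exact y'.2
  refine ⟨hx, hy, ?_⟩
  rw [← e4]
  congr 1
  exact Subtype.ext ((congrArg B hx').trans (e2.trans e3.symm)).symm

/-- **Corollary.** Let `A, B` be symmetric operators in a Hilbert space `H` with
`𝒟 := dom A ⊆ dom B`, `𝒟 ⊆ dom (AB) ∩ dom (BA)`, and `A B x = B A x` for all `x ∈ 𝒟`.
If either (a) `A` is selfadjoint, or (b) `A` is essentially selfadjoint and `B` is
`A`-bounded, then both `B` and `A + B`, restricted to `𝒟`, are essentially selfadjoint. -/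
theorem essentially_selfadjoint_of_commute {𝕜 H : Type*} [RCLike 𝕜]
    [NormedAddCommGroup H] [InnerProductSpace 𝕜 H] [CompleteSpace H]
    (A B : H →ₗ.[𝕜] H)
    (hAsymm : A.IsSymmetricOp) (hBsymm : B.IsSymmetricOp)
    (hsub : A.domain ≤ B.domain)
    (hAB : A.domain ≤ (A.pcomp B).domain) (hBA : A.domain ≤ (B.pcomp A).domain)
    (hcomm : ∀ x : A.domain, (A.pcomp B) ⟨x.1, hAB x.2⟩ = (B.pcomp A) ⟨x.1, hBA x.2⟩)
    (hcase : A.IsSelfAdjointOp ∨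
      (A.IsEssSelfAdjointOp ∧ ∃ α β : ℝ, 0 ≤ α ∧ 0 ≤ β ∧ ∀ x : A.domain,
        ‖B ⟨x.1, hsub x.2⟩‖ ^ 2 ≤ α * ‖A x‖ ^ 2 + β * ‖(x : H)‖ ^ 2)) :
    (B.domRestrict A.domain).IsEssSelfAdjointOp ∧
      ((A + B).domRestrict A.domain).IsEssSelfAdjointOp := by
  let B' : A.domain →ₗ[𝕜] H := B.toFun ∘ₗ Submodule.inclusion hsub
  have hB' : ∀ x : A.domain, B' x = B ⟨x.1, hsub x.2⟩ := fun x => rfl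
  have hs : ∀ x y : A.domain, ⟪B' x, (y : H)⟫_𝕜 = ⟪(x : H), B' y⟫_𝕜 := fun x y =>
    hBsymm ⟨x.1, hsub x.2⟩ ⟨y.1, hsub y.2⟩
  have hwc : ∀ x y : A.domain, ⟪B' x, A y⟫_𝕜 = ⟪A x, B' y⟫_𝕜 := by
    intro x y
    obtain ⟨h1, h2, h3⟩ := pcomp_graph A B ⟨y.1, hAB y.2⟩
    obtain ⟨h4, h5, h6⟩ := pcomp_graph B A ⟨y.1, hBA y.2⟩
    have e : A ⟨B ⟨y.1, h1⟩, h2⟩ = B ⟨A y, h5⟩ := h3.symm.trans ((hcomm y).trans h6)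
    calc ⟪B' x, A y⟫_𝕜 = ⟪(x : H), B ⟨A y, h5⟩⟫_𝕜 := hBsymm ⟨x.1, hsub x.2⟩ ⟨A y, h5⟩
      _ = ⟪(x : H), A ⟨B ⟨y.1, h1⟩, h2⟩⟫_𝕜 := by rw [e]
      _ = ⟪A x, B' y⟫_𝕜 := (hAsymm x ⟨_, h2⟩).symm
  have hcase' : A.IsSelfAdjointOp ∨
      (A.IsEssSelfAdjointOp ∧ ∃ α β : ℝ, 0 ≤ α ∧ 0 ≤ β ∧ ∀ x : A.domain,
        ‖B' x‖ ≤ α * ‖A x‖ + β * ‖(x : H)‖) := by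
    refine hcase.imp_right (And.imp_right ?_)
    rintro ⟨α, β, hα, hβ, h⟩
    refine ⟨√α, √β, by positivity, by positivity, fun x => ?_⟩
    refine (sq_le_sq₀ (norm_nonneg _) (by positivity)).1 ?_
    have h1 : 0 ≤ √α * ‖A x‖ * (√β * ‖(x : H)‖) := by positivity
    have h2 := h x
    rw [← hB'] at h2
    nlinarith [Real.sq_sqrt hα, Real.sq_sqrt hβ]
  constructor
  · exact isEssSelfAdjointOp_of_weak_comm A _ hAsymm (inf_eq_left.2 hsub) B'
      (fun x y hxy => LinearPMap.domRestrict_apply hxy) hs hwc hcase'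
  · refine isEssSelfAdjointOp_of_weak_comm A ((A + B).domRestrict A.domain) hAsymm
      (inf_eq_left.2 (le_inf le_rfl hsub))
      (A.toFun + B') ?_ ?_ ?_ ?_
    · intro x y hxy
      exact LinearPMap.domRestrict_apply (f := A + B) (y := ⟨y, y.2, hsub y.2⟩) hxy
    · intro x y
      change ⟪A x + B' x, _⟫_𝕜 = ⟪_, A y + B' y⟫_𝕜
      rw [inner_add_left, inner_add_right, hAsymm, hs]
    · intro x y
      change ⟪A x + B' x, _⟫_𝕜 = ⟪_, A y + B' y⟫_𝕜
      rw [inner_add_left, inner_add_right, hwc]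
    · refine hcase'.imp_right (And.imp_right ?_)
      rintro ⟨α, β, hα, hβ, h⟩
      refine ⟨α + 1, β, by positivity, hβ, fun x => ?_⟩
      have h1 := norm_add_le (A x) (B' x)
      have h2 := h x
      change ‖A x + B' x‖ ≤ _
      linarith
end

section
/- Let A be a symmetric linear operator in a real or complex Hilbert space H and let m be a positive integer such that the power Aᵐ (with its natural domain) is essentially selfadjoint. If p is a polynomial with real coefficients of degree at most m, then p(A), restricted to dom(Aᵐ), is essentially selfadjoint. -/
/-! The operator `A` is studied through the ranges of polynomials in it. A densely defined symmetric
operator `T` is essentially selfadjoint iff `T ± i` have dense range. To treat real and complex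
scalars at once, `H` is replaced by its complexification `Cplx 𝕜 H = H ⊕ iH`, also when `𝕜 = ℂ`; the
two directions of the criterion are `dense_of_isEssSelfAdjointOp` and `isEssSelfAdjointOp_of_dense`.

The ranges of `Aᵐ ± i` on `dom Aᵐ` are therefore dense. The polynomials `Xᵐ ± i` split into linear
factors with nonreal roots, and as a symmetric operator satisfies `|Im w| ‖x‖ ≤ ‖(A - w) x‖`, factors
can be handled one at a time.

* The range of `A - w` contains that of `Aᵐ ± i` if `wᵐ ± i = 0`. There are such `w` in both half
  planes, and density of the range propagates over a half plane
  (`dense_shiftRange_of_same_side`), so `A - z` has dense range for every nonreal `z`.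
* If `(A - w) f(A)` has dense range on `dom Aᵐ`, then `f(A) (dom Aᵐ)` is dense in `dom A` for the
  graph norm (`exists_orbit_near`). Hence the factor `X - w` can be dropped, or replaced by `X - z`
  for any nonreal `z`, without losing density (`dense_polyRange_erase`,
  `dense_polyRange_replace`).

Exchanging the roots of `Xᵐ - i` for those of `f` shows that `f(A)` has dense range on `dom Aᵐ` for
every `f ≠ 0` of degree at most `m` without real roots (`dense_polyRange_of_no_real_root`). For a real
polynomial `p`, this applies to `f = p - i`, and the criterion yields the claim.

Operators are handled through their graphs, and `dom Aᵐ` through orbits `x, A x, …, Aᵐ x`. -/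

open LinearPMap

/-- The `n`-th power of a partially defined linear operator, with its natural domain:
`A⁰ = I` on all of `E` and `dom Aⁿ⁺¹ = {x ∈ dom Aⁿ : Aⁿ x ∈ dom A}`. -/
noncomputable def LinearPMap.ppow {R E : Type*} [Ring R] [AddCommGroup E] [Module R E]
    (A : E →ₗ.[R] E) : ℕ → E →ₗ.[R] E
  | 0 => (LinearMap.id : E →ₗ[R] E).toPMap ⊤
  | n + 1 => A.pcomp (A.ppow n)

/-! ### Ranges of polynomials in an operator that is bounded below -/

section Abstract

open Polynomial

variable {K : Type*} [NormedAddCommGroup K] [NormedSpace ℂ K]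

/-- The linear map `f = ∑ fₖ Xᵏ ↦ ∑ fₖ • aₖ` attached to a sequence `a`. For `aₖ = Aᵏ x` its value
at `f` is `f(A) x`. -/
noncomputable def seqEval (a : ℕ → K) : ℂ[X] →ₗ[ℂ] K :=
  Polynomial.lsum fun k => LinearMap.toSpanSingleton ℂ K (a k)

lemma seqEval_monomial (a : ℕ → K) (k : ℕ) (c : ℂ) : seqEval a (monomial k c) = c • a k := by
  simp [seqEval, Polynomial.lsum_apply, Polynomial.sum_monomial_index]

/-- `a` is an orbit of length `m` of the linear relation `G`: for the graph `G` of `A` this says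
that `a 0` lies in `dom Aᵐ` and `a k = Aᵏ (a 0)` for all `k ≤ m`. Later terms are arbitrary. -/
def IsOrbit {R V : Type*} [Semiring R] [AddCommMonoid V] [Module R V]
    (G : Submodule R (V × V)) (m : ℕ) (a : ℕ → V) : Prop :=
  ∀ k < m, (a k, a (k + 1)) ∈ G

/-- The range of `f(A)` on `dom Aᵐ`, where `G` is the graph of `A` (meaningful when
`deg f ≤ m`). -/
def polyRange (G : Submodule ℂ (K × K)) (m : ℕ) (f : ℂ[X]) : Set K :=
  {v | ∃ a, IsOrbit G m a ∧ seqEval a f = v}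

/-- The range of `A - w`, where `G` is the graph of `A`. -/
def shiftRange (G : Submodule ℂ (K × K)) (w : ℂ) : Submodule ℂ K :=
  G.map (LinearMap.snd ℂ K K - w • LinearMap.fst ℂ K K)

lemma mem_shiftRange {G : Submodule ℂ (K × K)} {w : ℂ} {v : K} :
    v ∈ shiftRange G w ↔ ∃ x y, (x, y) ∈ G ∧ y - w • x = v := by
  simp [shiftRange, Submodule.mem_map]

/-- The lower bound `|Im w| ‖x‖ ≤ ‖(A - w) x‖` enjoyed by symmetric operators. -/
def IsBddBelow (G : Submodule ℂ (K × K)) : Prop :=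
  ∀ x y, (x, y) ∈ G → ∀ w : ℂ, |w.im| * ‖x‖ ≤ ‖y - w • x‖

variable {G : Submodule ℂ (K × K)} {m : ℕ}

/-- `A f(A) x = (X f)(A) x` for `x ∈ dom Aᵐ` and `deg f < m`. -/
lemma seqEval_mem {a : ℕ → K} (ha : IsOrbit G m a) {f : ℂ[X]} (hf : f.natDegree < m) :
    (seqEval a f, seqEval a (X * f)) ∈ G := by
  have h : (seqEval a f, seqEval a (X * f)) =
      ∑ k ∈ Finset.range m, f.coeff k • (a k, a (k + 1)) := by
    conv_lhs => rw [f.as_sum_range' m hf]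
    simp only [Finset.mul_sum, map_sum, X_mul_monomial, seqEval_monomial]
    ext <;> simp [Prod.fst_sum, Prod.snd_sum]
  rw [h]
  exact G.sum_mem fun k hk => G.smul_mem _ (ha k (Finset.mem_range.1 hk))

lemma seqEval_X_sub_C_mul (a : ℕ → K) (w : ℂ) (f : ℂ[X]) :
    seqEval a ((X - C w) * f) = seqEval a (X * f) - w • seqEval a f := by
  rw [sub_mul, _root_.map_sub, C_mul', _root_.map_smul]

lemma polyRange_subset_shiftRange {w : ℂ} {f : ℂ[X]} (hf : f.natDegree < m) :
    polyRange G m ((X - C w) * f) ⊆ shiftRange G w := by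
  rintro _ ⟨a, ha, rfl⟩
  exact mem_shiftRange.2 ⟨_, _, seqEval_mem ha hf, (seqEval_X_sub_C_mul a w f).symm⟩

/-- If `(A - w) f(A)` has dense range on `dom Aᵐ`, then the vectors `f(A) x`, `x ∈ dom Aᵐ`, are
dense in `dom A` for the graph norm of `A`: this holds because `A - w` is bounded below. -/
lemma exists_orbit_near (hG : IsBddBelow G) {w : ℂ} (hw : w.im ≠ 0) {f : ℂ[X]}
    (hf : f.natDegree < m) (hd : Dense (polyRange G m ((X - C w) * f))) {x y : K}
    (hxy : (x, y) ∈ G) {ε : ℝ} (hε : 0 < ε) :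
    ∃ a, IsOrbit G m a ∧ ‖x - seqEval a f‖ < ε ∧ ‖y - seqEval a (X * f)‖ < ε := by
  have hw' : 0 < |w.im| := abs_pos.2 hw
  obtain ⟨δ, hδ, hδ1, hδ2⟩ : ∃ δ > 0, δ / |w.im| < ε ∧ δ + ‖w‖ * (δ / |w.im|) < ε := by
    have h : Filter.Tendsto (fun δ : ℝ => δ / |w.im|) (nhdsWithin 0 (Set.Ioi 0)) (nhds 0) := by
      have : Continuous fun δ : ℝ => δ / |w.im| := by fun_prop
      simpa using (this.tendsto 0).mono_left nhdsWithin_le_nhds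
    have h' : Filter.Tendsto (fun δ : ℝ => δ + ‖w‖ * (δ / |w.im|))
        (nhdsWithin 0 (Set.Ioi 0)) (nhds 0) := by
      have : Continuous fun δ : ℝ => δ + ‖w‖ * (δ / |w.im|) := by fun_prop
      simpa using (this.tendsto 0).mono_left nhdsWithin_le_nhds
    obtain ⟨δ, h1, h2, h3⟩ := ((h.eventually_lt_const hε).and
      ((h'.eventually_lt_const hε).and self_mem_nhdsWithin)).exists
    exact ⟨δ, h3, h1, h2⟩
  obtain ⟨_, ⟨a, ha, rfl⟩, hlt⟩ := hd.exists_dist_lt (y - w • x) hδ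
  rw [dist_eq_norm, seqEval_X_sub_C_mul] at hlt
  have hmem := G.sub_mem hxy (seqEval_mem ha hf)
  have e : y - w • x - (seqEval a (X * f) - w • seqEval a f) =
      (y - seqEval a (X * f)) - w • (x - seqEval a f) := by
    rw [smul_sub]; abel
  rw [e] at hlt
  have h1 : ‖x - seqEval a f‖ ≤ δ / |w.im| := by
    rw [le_div_iff₀' hw']
    exact (hG _ _ hmem w).trans hlt.le
  refine ⟨a, ha, h1.trans_lt hδ1, lt_of_le_of_lt ?_ hδ2⟩
  calc ‖y - seqEval a (X * f)‖
      = ‖(y - seqEval a (X * f)) - w • (x - seqEval a f) + w • (x - seqEval a f)‖ := by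
        rw [sub_add_cancel]
    _ ≤ δ + ‖w‖ * (δ / |w.im|) := by
        refine (norm_add_le _ _).trans (add_le_add hlt.le ?_)
        rw [norm_smul]
        gcongr

/-- A linear factor `X - w` with `w` nonreal may be dropped without losing density of the range. -/
lemma dense_polyRange_erase (hG : IsBddBelow G) (hdom : Dense {x | ∃ y, (x, y) ∈ G})
    {w : ℂ} (hw : w.im ≠ 0) {f : ℂ[X]} (hf : f.natDegree < m)
    (hd : Dense (polyRange G m ((X - C w) * f))) : Dense (polyRange G m f) := by
  refine dense_closure.1 (hdom.mono ?_)
  rintro x ⟨y, hxy⟩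
  refine Metric.mem_closure_iff.2 fun ε hε => ?_
  obtain ⟨a, ha, h, -⟩ := exists_orbit_near hG hw hf hd hxy hε
  exact ⟨_, ⟨a, ha, rfl⟩, by rwa [dist_eq_norm]⟩

/-- A linear factor `X - w` with `w` nonreal may be replaced by any `X - z` for which `A - z` has
dense range. -/
lemma dense_polyRange_replace (hG : IsBddBelow G) {w z : ℂ} (hw : w.im ≠ 0)
    (hz : Dense (shiftRange G z : Set K)) {f : ℂ[X]} (hf : f.natDegree < m)
    (hd : Dense (polyRange G m ((X - C w) * f))) : Dense (polyRange G m ((X - C z) * f)) := by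
  refine dense_closure.1 (hz.mono ?_)
  intro v hv
  obtain ⟨x, y, hxy, rfl⟩ := mem_shiftRange.1 hv
  refine Metric.mem_closure_iff.2 fun ε hε => ?_
  have hz' : 0 < 1 + ‖z‖ := by positivity
  obtain ⟨a, ha, h1, h2⟩ := exists_orbit_near hG hw hf hd hxy (div_pos hε hz')
  refine ⟨_, ⟨a, ha, rfl⟩, ?_⟩
  rw [dist_eq_norm, seqEval_X_sub_C_mul]
  have e : y - z • x - (seqEval a (X * f) - z • seqEval a f) =
      (y - seqEval a (X * f)) - z • (x - seqEval a f) := by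
    rw [smul_sub]; abel
  rw [e]
  calc _ ≤ ‖y - seqEval a (X * f)‖ + ‖z‖ * ‖x - seqEval a f‖ := by
        rw [← norm_smul]; exact norm_sub_le _ _
    _ < ε / (1 + ‖z‖) + ‖z‖ * (ε / (1 + ‖z‖)) := by
        refine add_lt_add_of_lt_of_le h2 ?_
        gcongr
    _ = ε := by field_simp

/-- Density of the range of `A - w` is stable under small perturbations of `w`. -/
lemma dense_shiftRange_of_near (hG : IsBddBelow G) {w z : ℂ}
    (hwz : ‖w - z‖ < |w.im|) (hd : Dense (shiftRange G w : Set K)) :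
    Dense (shiftRange G z : Set K) := by
  rw [Submodule.dense_iff_topologicalClosure_eq_top]
  by_contra hne
  have hw : 0 < |w.im| := (norm_nonneg _).trans_lt hwz
  -- by Riesz's lemma some `v` is almost orthogonal to the range of `A - z`; since `(A - w) x ≈ v` for
  -- some `x`, the vector `(A - z) x` turns out to be too close to `v`
  obtain ⟨r, hr1, hr2⟩ : ∃ r, ‖w - z‖ / |w.im| < r ∧ r < 1 :=
    exists_between ((div_lt_one hw).2 hwz)
  obtain ⟨v, hv, hvr⟩ := riesz_lemma (F := (shiftRange G z).topologicalClosure)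
    (Submodule.isClosed_topologicalClosure _)
    (by by_contra! h; exact hne (Submodule.eq_top_iff'.2 h)) hr2
  have hv0 : 0 < ‖v‖ := norm_pos_iff.2 fun h => hv (h ▸ Submodule.zero_mem _)
  set q := ‖w - z‖ / |w.im| with hq
  have hq0 : 0 ≤ q := by positivity
  have hδ : 0 < (r - q) * ‖v‖ / (1 + q) := by
    have := sub_pos.2 hr1
    positivity
  obtain ⟨u, hu2, hu1⟩ := hd.exists_dist_lt v hδ
  obtain ⟨x, y, hxy, rfl⟩ := mem_shiftRange.1 hu2
  rw [dist_eq_norm] at hu1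
  set δ := (r - q) * ‖v‖ / (1 + q) with hδdef
  have hx : ‖x‖ ≤ (‖v‖ + δ) / |w.im| := by
    rw [le_div_iff₀' hw]
    refine (hG x y hxy w).trans ?_
    have : ‖y - w • x‖ ≤ ‖v‖ + ‖v - (y - w • x)‖ := by
      have := norm_sub_le v (v - (y - w • x))
      rwa [sub_sub_cancel] at this
    linarith
  have h1 := hvr (y - z • x) (Submodule.le_topologicalClosure _ (mem_shiftRange.2 ⟨x, y, hxy, rfl⟩))
  have h2 : ‖v - (y - z • x)‖ ≤ ‖v - (y - w • x)‖ + ‖w - z‖ * ‖x‖ := by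
    rw [← norm_smul]
    have e : v - (y - z • x) = (v - (y - w • x)) - (w - z) • x := by
      rw [sub_smul]; abel
    rw [e]
    exact norm_sub_le _ _
  have h3 : ‖w - z‖ * ‖x‖ ≤ q * (‖v‖ + δ) := by
    calc ‖w - z‖ * ‖x‖ ≤ ‖w - z‖ * ((‖v‖ + δ) / |w.im|) := by gcongr
      _ = q * (‖v‖ + δ) := by rw [hq]; ring
  have h4 : δ * (1 + q) = (r - q) * ‖v‖ := by
    rw [hδdef]; field_simp
  nlinarith

/-- Density of the range of `A - w` propagates over the open half plane that contains `w`. -/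
lemma dense_shiftRange_of_same_side (hG : IsBddBelow G) {w z : ℂ}
    (h : 0 < w.im * z.im) (hd : Dense (shiftRange G w : Set K)) :
    Dense (shiftRange G z : Set K) := by
  have hw : w.im ≠ 0 := fun h0 => by simp [h0] at h
  let s : Set ℂ := {ζ | 0 < w.im * ζ.im}
  let u : Set ℂ := {ζ | 0 < w.im * ζ.im ∧ Dense (shiftRange G ζ : Set K)}
  have hs_open : IsOpen s := isOpen_lt continuous_const (by fun_prop)
  have hs : IsPreconnected s := by
    refine Convex.isPreconnected ?_
    intro x hx y hy a b ha hb hab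
    simp only [s, Set.mem_ofPred_eq, Complex.add_im, Complex.real_smul,
      Complex.im_ofReal_mul] at hx hy ⊢
    rcases ha.eq_or_lt with rfl | ha
    · have : b = 1 := by linarith
      subst this; linarith
    · have := mul_pos ha hx
      have := mul_nonneg hb hy.le
      nlinarith
  have near : ∀ ζ ∈ s, ∀ᶠ ξ in nhds ζ, ξ ∈ s ∧ ‖ζ - ξ‖ < |ζ.im| ∧ ‖ξ - ζ‖ < |ξ.im| := by
    intro ζ hζ
    have hζ' : 0 < |ζ.im| := abs_pos.2 fun h0 => by simp [s, h0] at hζ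
    refine Filter.Eventually.and (hs_open.mem_nhds hζ) (Filter.Eventually.and ?_ ?_)
    · have : Continuous fun ξ : ℂ => ‖ζ - ξ‖ := by fun_prop
      exact this.continuousAt.eventually_lt_const (by simpa using hζ')
    · have c1 : Continuous fun ξ : ℂ => ‖ξ - ζ‖ := by fun_prop
      have c2 : Continuous fun ξ : ℂ => |ξ.im| := by fun_prop
      exact c1.continuousAt.eventually_lt c2.continuousAt (by simpa using hζ')
  have hu : IsOpen u := isOpen_iff_mem_nhds.2 fun ζ hζ =>
    (near ζ hζ.1).mono fun ξ hξ => ⟨hξ.1, dense_shiftRange_of_near hG hξ.2.1 hζ.2⟩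
  have hsub : s ⊆ u := by
    refine hs.subset_of_closure_inter_subset hu ⟨w, ?_, ?_, hd⟩ ?_
    · exact mul_self_pos.2 hw
    · exact mul_self_pos.2 hw
    · rintro ζ ⟨hζ, hζs⟩
      obtain ⟨ξ, hξ, hξu⟩ := ((mem_closure_iff_frequently.1 hζ).and_eventually (near ζ hζs)).exists
      exact ⟨hζs, dense_shiftRange_of_near hG hξu.2.2 hξ.2⟩
  exact (hsub h).2

/-- Some of the nonreal roots `W` can be exchanged for arbitrary nonreal roots `Y` and the others
dropped. -/
lemma dense_polyRange_exchange (hG : IsBddBelow G) (hdom : Dense {x | ∃ y, (x, y) ∈ G})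
    (hran : ∀ z : ℂ, z.im ≠ 0 → Dense (shiftRange G z : Set K)) (W : Multiset ℂ) :
    ∀ (f : ℂ[X]) (Y : Multiset ℂ), f.natDegree + W.card ≤ m → Y.card ≤ W.card →
      (∀ w ∈ W, w.im ≠ 0) → (∀ z ∈ Y, z.im ≠ 0) →
      Dense (polyRange G m (f * (W.map fun w => X - C w).prod)) →
      Dense (polyRange G m (f * (Y.map fun z => X - C z).prod)) := by
  induction W using Multiset.induction_on with
  | empty =>
    intro f Y _ hY _ _ hd
    obtain rfl : Y = 0 := by simpa using hY
    exact hd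
  | cons w W ih =>
    intro f Y hf hY hW hYim hd
    rw [Multiset.card_cons] at hf hY
    have hw : w.im ≠ 0 := hW w (Multiset.mem_cons_self _ _)
    have hW' : ∀ v ∈ W, v.im ≠ 0 := fun v hv => hW v (Multiset.mem_cons_of_mem hv)
    have hdeg : (f * (W.map fun w => X - C w).prod).natDegree < m := by
      refine lt_of_le_of_lt natDegree_mul_le ?_
      rw [natDegree_multiset_prod_X_sub_C_eq_card]
      omega
    rw [Multiset.map_cons, Multiset.prod_cons, mul_left_comm] at hd
    induction Y using Multiset.induction_on with
    | empty =>
      exact ih f 0 (by omega) (by simp) hW' (by simp)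
        (dense_polyRange_erase hG hdom hw hdeg hd)
    | cons z Y _ =>
      rw [Multiset.card_cons] at hY
      have hd' := dense_polyRange_replace hG hw
        (hran z (hYim z (Multiset.mem_cons_self _ _))) hdeg hd
      rw [← mul_assoc] at hd'
      have := ih ((X - C z) * f) Y ?_ (by omega) hW'
        (fun v hv => hYim v (Multiset.mem_cons_of_mem hv)) hd'
      · rwa [Multiset.map_cons, Multiset.prod_cons, mul_left_comm, ← mul_assoc]
      · have := natDegree_mul_le (p := X - C z) (q := f)
        rw [natDegree_X_sub_C] at this
        omega

/-- If `Aᵐ ± i` have dense range then so does `f(A)` on `dom Aᵐ`, for every complex polynomial `f`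
of degree at most `m` without real roots. -/
theorem dense_polyRange_of_no_real_root (hG : IsBddBelow G) (hdom : Dense {x | ∃ y, (x, y) ∈ G})
    (hm : 1 ≤ m) (h₁ : Dense (polyRange G m (X ^ m - C Complex.I)))
    (h₂ : Dense (polyRange G m (X ^ m - C (-Complex.I)))) {f : ℂ[X]} (hf0 : f ≠ 0)
    (hf : f.natDegree ≤ m) (hroots : ∀ z ∈ f.roots, z.im ≠ 0) : Dense (polyRange G m f) := by
  -- every root `w` of `Xᵐ - ζ` gives a dense range of `A - w`
  have key : ∀ ζ w : ℂ, Dense (polyRange G m (X ^ m - C ζ)) → w ^ m = ζ →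
      Dense (shiftRange G w : Set K) := by
    intro ζ w hd hw
    obtain ⟨g, hg⟩ := dvd_iff_isRoot.2 (show (X ^ m - C ζ).IsRoot w by simp [hw])
    have hg0 : g ≠ 0 := by
      rintro rfl
      rw [mul_zero] at hg
      exact X_pow_sub_C_ne_zero hm ζ hg
    have hgd : g.natDegree < m := by
      have := congrArg natDegree hg
      rw [natDegree_X_pow_sub_C, natDegree_mul (X_sub_C_ne_zero w) hg0, natDegree_X_sub_C] at this
      omega
    rw [hg] at hd
    exact hd.mono (polyRange_subset_shiftRange hgd)
  have him : ∀ w : ℂ, w ^ m = Complex.I → w.im ≠ 0 := by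
    intro w hw h0
    have : w = (w.re : ℂ) := Complex.ext rfl (by simp [h0])
    rw [this, ← Complex.ofReal_pow] at hw
    have := congrArg Complex.im hw
    rw [Complex.ofReal_im, Complex.I_im] at this
    exact zero_ne_one this
  have hran : ∀ z : ℂ, z.im ≠ 0 → Dense (shiftRange G z : Set K) := by
    intro z hz
    obtain ⟨w, hw⟩ := IsAlgClosed.exists_pow_nat_eq Complex.I hm
    have hw0 := him w hw
    rcases (mul_ne_zero hw0 hz).lt_or_gt with h | h
    · refine dense_shiftRange_of_same_side hG (w := (starRingEnd ℂ) w) ?_ (key _ _ h₂ ?_)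
      · rw [Complex.conj_im]; linarith
      · rw [← map_pow, hw, Complex.conj_I]
    · exact dense_shiftRange_of_same_side hG h (key _ _ h₁ hw)
  have hsplit : ∀ g : ℂ[X], g = C g.leadingCoeff * (g.roots.map fun w => X - C w).prod := fun g =>
    (IsAlgClosed.splits g).eq_prod_roots
  have hcard : (X ^ m - C Complex.I : ℂ[X]).roots.card = m := by
    rw [← (IsAlgClosed.splits _).natDegree_eq_card_roots, natDegree_X_pow_sub_C]
  have hd := hsplit (X ^ m - C Complex.I)
  rw [leadingCoeff_X_pow_sub_C hm, C_1] at hd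
  rw [hd] at h₁
  have hfc : f.roots.card ≤ m := (card_roots' f).trans hf
  have := dense_polyRange_exchange hG hdom hran _ 1 f.roots (by simp [hcard])
    (by rw [hcard]; exact hfc) (fun w hw => him w ?_) hroots h₁
  · rw [one_mul] at this
    refine this.mono ?_
    rintro _ ⟨a, ha, rfl⟩
    have hl : f.leadingCoeff ≠ 0 := leadingCoeff_ne_zero.2 hf0
    -- rescaling the orbit absorbs the leading coefficient
    refine ⟨fun k => f.leadingCoeff⁻¹ • a k, fun k hk => G.smul_mem _ (ha k hk), ?_⟩
    have hs : ∀ g : ℂ[X], seqEval (fun k => f.leadingCoeff⁻¹ • a k) g =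
        f.leadingCoeff⁻¹ • seqEval a g := by
      intro g
      rw [g.as_sum_range]
      simp only [map_sum, seqEval_monomial, Finset.smul_sum, smul_comm f.leadingCoeff⁻¹]
    have hs' : seqEval a f = seqEval a (C f.leadingCoeff * (f.roots.map fun w => X - C w).prod) :=
      congrArg _ (hsplit f)
    rw [hs, hs', C_mul', _root_.map_smul, smul_smul, inv_mul_cancel₀ hl, one_smul]
  · have := (mem_roots'.1 hw).2
    simpa [sub_eq_zero] using this

end Abstract

/-! ### The complexification of a Hilbert space -/

section Complexification

/-- The complexification `H ⊕ iH` of `H` regarded as a real space, with the Hilbert sum norm. Only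
real scalars of `𝕜` enter the complex structure, so that for `𝕜 = ℂ` the new imaginary unit is
different from the one of `H`. -/
def Cplx (_ : Type*) (H : Type*) : Type _ := WithLp 2 (H × H)

variable (𝕜 : Type*) (H : Type*) [NormedAddCommGroup H]

namespace Cplx

noncomputable instance : NormedAddCommGroup (Cplx 𝕜 H) :=
  inferInstanceAs (NormedAddCommGroup (WithLp 2 (H × H)))

variable {𝕜 H}

/-- The vector `x + i y`. -/
def mk (x y : H) : Cplx 𝕜 H := WithLp.toLp 2 (x, y)

/-- The real part of a vector of the complexification. -/
def re : Cplx 𝕜 H →+ H where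
  toFun u := WithLp.fst (p := 2) u
  map_zero' := rfl
  map_add' _ _ := rfl

/-- The imaginary part of a vector of the complexification. -/
def im : Cplx 𝕜 H →+ H where
  toFun u := WithLp.snd (p := 2) u
  map_zero' := rfl
  map_add' _ _ := rfl

@[simp] lemma re_mk (x y : H) : re (mk x y : Cplx 𝕜 H) = x := rfl
@[simp] lemma im_mk (x y : H) : im (mk x y : Cplx 𝕜 H) = y := rfl

lemma ext' {u v : Cplx 𝕜 H} (h₁ : re u = re v) (h₂ : im u = im v) : u = v :=
  (WithLp.ofLp_injective 2) (Prod.ext h₁ h₂)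

lemma norm_sq (u : Cplx 𝕜 H) : ‖u‖ ^ 2 = ‖re u‖ ^ 2 + ‖im u‖ ^ 2 :=
  WithLp.prod_norm_sq_eq_of_L2 (α := H) (β := H) u

variable [RCLike 𝕜] [InnerProductSpace 𝕜 H]

noncomputable instance : SMul ℂ (Cplx 𝕜 H) where
  smul z u := mk ((z.re : 𝕜) • re u - (z.im : 𝕜) • im u) ((z.re : 𝕜) • im u + (z.im : 𝕜) • re u)

@[simp] lemma re_smul (z : ℂ) (u : Cplx 𝕜 H) :
    re (z • u) = (z.re : 𝕜) • re u - (z.im : 𝕜) • im u := rfl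
@[simp] lemma im_smul (z : ℂ) (u : Cplx 𝕜 H) :
    im (z • u) = (z.re : 𝕜) • im u + (z.im : 𝕜) • re u := rfl

noncomputable instance : Module ℂ (Cplx 𝕜 H) where
  one_smul u := by apply ext' <;> simp
  mul_smul z w u := by
    apply ext' <;> simp only [re_smul, im_smul, Complex.mul_re, Complex.mul_im] <;>
      push_cast <;> module
  smul_zero z := by apply ext' <;> simp
  smul_add z u v := by apply ext' <;> simp only [re_smul, im_smul, _root_.map_add] <;> module
  add_smul z w u := by
    apply ext' <;> simp only [re_smul, im_smul, _root_.map_add, Complex.add_re, Complex.add_im] <;>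
      module
  zero_smul u := by apply ext' <;> simp

lemma norm_smul_eq (z : ℂ) (u : Cplx 𝕜 H) : ‖z • u‖ = ‖z‖ * ‖u‖ := by
  refine (sq_eq_sq₀ (norm_nonneg _) (by positivity)).1 ?_
  rw [mul_pow, norm_sq, norm_sq, re_smul, im_smul, @norm_sub_sq 𝕜, @norm_add_sq 𝕜,
    Complex.sq_norm, Complex.normSq_apply]
  simp only [norm_smul, inner_smul_left, inner_smul_right, RCLike.conj_ofReal, RCLike.norm_ofReal,
    mul_pow, sq_abs, RCLike.re_ofReal_mul]
  rw [inner_re_symm (𝕜 := 𝕜) (re u) (im u)]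
  ring

noncomputable instance : NormedSpace ℂ (Cplx 𝕜 H) where
  norm_smul_le z u := (norm_smul_eq z u).le

end Cplx

variable {𝕜 H} [RCLike 𝕜] [InnerProductSpace 𝕜 H]

/-- A linear relation (such as the graph of an operator) is symmetric if `⟪y, x'⟫ = ⟪x, y'⟫` for all
`(x, y)` and `(x', y')` in it. -/
def IsSymmRel (g : Submodule 𝕜 (H × H)) : Prop :=
  ∀ x y x' y', (x, y) ∈ g → (x', y') ∈ g → inner 𝕜 y x' = inner 𝕜 x y'

/-- The complexification of a linear relation, `A (x + i y) = A x + i A y`. -/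
def cplxGraph (g : Submodule 𝕜 (H × H)) : Submodule ℂ (Cplx 𝕜 H × Cplx 𝕜 H) where
  carrier := {p | (Cplx.re p.1, Cplx.re p.2) ∈ g ∧ (Cplx.im p.1, Cplx.im p.2) ∈ g}
  zero_mem' := ⟨g.zero_mem, g.zero_mem⟩
  add_mem' hp hq := ⟨g.add_mem hp.1 hq.1, g.add_mem hp.2 hq.2⟩
  smul_mem' z _ hp :=
    ⟨g.sub_mem (g.smul_mem (z.re : 𝕜) hp.1) (g.smul_mem (z.im : 𝕜) hp.2),
      g.add_mem (g.smul_mem (z.re : 𝕜) hp.2) (g.smul_mem (z.im : 𝕜) hp.1)⟩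

lemma mem_cplxGraph {g : Submodule 𝕜 (H × H)} {x y : Cplx 𝕜 H} :
    (x, y) ∈ cplxGraph g ↔ (Cplx.re x, Cplx.re y) ∈ g ∧ (Cplx.im x, Cplx.im y) ∈ g := Iff.rfl

/-- The complexification of a symmetric relation is symmetric, hence `A - w` is bounded below. -/
lemma isBddBelow_cplxGraph {g : Submodule 𝕜 (H × H)} (hg : IsSymmRel g) :
    IsBddBelow (cplxGraph g) := by
  intro x y hxy w
  obtain ⟨h1, h2⟩ := mem_cplxGraph.1 hxy
  set x₁ := Cplx.re x
  set x₂ := Cplx.im x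
  set y₁ := Cplx.re y
  set y₂ := Cplx.im y
  -- `‖(A - a - bi) x‖² = ‖(A - a) x‖² + b² ‖x‖²`
  have e : ‖y - w • x‖ ^ 2 = ‖y₁ - (w.re : 𝕜) • x₁‖ ^ 2 + ‖y₂ - (w.re : 𝕜) • x₂‖ ^ 2 +
      w.im ^ 2 * ‖x‖ ^ 2 := by
    have e1 : Cplx.re (y - w • x) = (y₁ - (w.re : 𝕜) • x₁) + (w.im : 𝕜) • x₂ := by
      simp only [_root_.map_sub, Cplx.re_smul, x₁, x₂, y₁]; abel
    have e2 : Cplx.im (y - w • x) = (y₂ - (w.re : 𝕜) • x₂) - (w.im : 𝕜) • x₁ := by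
      simp only [_root_.map_sub, Cplx.im_smul, x₁, x₂, y₂]; abel
    rw [Cplx.norm_sq, Cplx.norm_sq x, e1, e2, @norm_add_sq 𝕜, @norm_sub_sq 𝕜 _ _ _ _
      (y₂ - (w.re : 𝕜) • x₂) ((w.im : 𝕜) • x₁)]
    simp only [norm_smul, inner_smul_left, inner_smul_right, RCLike.conj_ofReal,
      RCLike.norm_ofReal, mul_pow, sq_abs, RCLike.re_ofReal_mul, inner_sub_left, _root_.map_sub]
    rw [hg _ _ _ _ h1 h2, inner_re_symm (𝕜 := 𝕜) x₁ y₂, inner_re_symm (𝕜 := 𝕜) x₁ x₂]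
    ring
  refine le_of_sq_le_sq ?_ (norm_nonneg _)
  rw [e, mul_pow, sq_abs]
  have := sq_nonneg ‖y₁ - (w.re : 𝕜) • x₁‖
  have := sq_nonneg ‖y₂ - (w.re : 𝕜) • x₂‖
  linarith

lemma dense_cplxGraph_domain {g : Submodule 𝕜 (H × H)} (h : Dense {x | ∃ y, (x, y) ∈ g}) :
    Dense {x | ∃ y, (x, y) ∈ cplxGraph g} := by
  have hd := (h.prod h).preimage (WithLp.homeomorphProd 2 H H).isOpenMap
  refine Dense.mono ?_ (show Dense (X := Cplx 𝕜 H) _ from hd)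
  rintro x ⟨⟨y₁, h₁⟩, ⟨y₂, h₂⟩⟩
  exact ⟨Cplx.mk y₁ y₂, h₁, h₂⟩

end Complexification

/-! ### Essential selfadjointness and dense ranges -/

section Criterion

variable {𝕜 : Type*} {H : Type*} [RCLike 𝕜] [NormedAddCommGroup H] [InnerProductSpace 𝕜 H]

/-- A linear relation and its closure have the same adjoint (the nontrivial inclusion). -/
lemma mem_adjoint_closure {g : Submodule 𝕜 (H × H)} {p : H × H} (hp : p ∈ g.adjoint) :
    p ∈ g.topologicalClosure.adjoint := by
  rw [Submodule.mem_adjoint_iff] at hp ⊢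
  intro a b hab
  have hc : IsClosed {q : H × H | inner 𝕜 q.2 p.1 - inner 𝕜 q.1 p.2 = 0} :=
    isClosed_eq (by fun_prop) continuous_const
  exact closure_minimal (s := (g : Set (H × H))) (fun q hq => hp q.1 q.2 hq) hc hab

/-- If `T` is essentially selfadjoint, then the complexification of `T - iσ` has dense range for
every real `σ ≠ 0`. -/
lemma dense_of_isEssSelfAdjointOp [CompleteSpace H] {T : H →ₗ.[𝕜] H}
    (hT : T.IsEssSelfAdjointOp) {σ : ℝ} (hσ : σ ≠ 0) :
    Dense {v : Cplx 𝕜 H | ∃ x y, (x, y) ∈ cplxGraph T.graph ∧ y - (σ * Complex.I) • x = v} := by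
  obtain ⟨hc, hd, hsa⟩ := hT
  have hadj : T.graph.topologicalClosure.adjoint = T.graph.topologicalClosure := by
    rw [hc.graph_closure_eq_closure_graph, ← LinearPMap.adjoint_graph_eq_graph_adjoint hd, hsa]
  let R : Submodule 𝕜 (WithLp 2 (H × H)) :=
    { carrier := {v | ∃ x₁ y₁ x₂ y₂, (x₁, y₁) ∈ T.graph ∧ (x₂, y₂) ∈ T.graph ∧
        v = WithLp.toLp 2 (y₁ + (σ : 𝕜) • x₂, y₂ - (σ : 𝕜) • x₁)}
      zero_mem' := ⟨0, 0, 0, 0, T.graph.zero_mem, T.graph.zero_mem, by simp; rfl⟩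
      add_mem' := by
        rintro _ _ ⟨x₁, y₁, x₂, y₂, h₁, h₂, rfl⟩ ⟨x₁', y₁', x₂', y₂', h₁', h₂', rfl⟩
        refine ⟨_, _, _, _, T.graph.add_mem h₁ h₁', T.graph.add_mem h₂ h₂', ?_⟩
        rw [← WithLp.toLp_add]
        congr 1
        ext
        · simp only [Prod.mk_add_mk]; module
        · simp only [Prod.mk_add_mk]; module
      smul_mem' := by
        rintro c _ ⟨x₁, y₁, x₂, y₂, h₁, h₂, rfl⟩
        refine ⟨_, _, _, _, T.graph.smul_mem c h₁, T.graph.smul_mem c h₂, ?_⟩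
        rw [← WithLp.toLp_smul]
        congr 1
        ext
        · simp only [Prod.smul_mk]; module
        · simp only [Prod.smul_mk]; module }
  have hR : Dense (R : Set (WithLp 2 (H × H))) := by
    rw [Submodule.dense_iff_topologicalClosure_eq_top, Submodule.topologicalClosure_eq_top_iff,
      Submodule.eq_bot_iff]
    intro q hq
    rw [Submodule.mem_orthogonal] at hq
    -- a vector `u + iv` orthogonal to the range satisfies `T* u = σ v` and `T* v = - σ u`
    obtain ⟨u, v, rfl⟩ : ∃ u v, q = WithLp.toLp 2 (u, v) := ⟨q.fst, q.snd, rfl⟩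
    have hu : (u, (σ : 𝕜) • v) ∈ T.graph.topologicalClosure := by
      rw [← hadj]
      refine mem_adjoint_closure ((Submodule.mem_adjoint_iff _ _).2 fun x y hxy => ?_)
      have := hq _ ⟨x, y, 0, 0, hxy, T.graph.zero_mem, rfl⟩
      simpa [WithLp.prod_inner_apply, inner_smul_left, inner_smul_right, ← sub_eq_add_neg]
        using this
    have hv : (v, -((σ : 𝕜) • u)) ∈ T.graph.topologicalClosure := by
      rw [← hadj]
      refine mem_adjoint_closure ((Submodule.mem_adjoint_iff _ _).2 fun x y hxy => ?_)
      have := hq _ ⟨0, 0, x, y, T.graph.zero_mem, hxy, rfl⟩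
      simpa [WithLp.prod_inner_apply, inner_smul_left, inner_smul_right, add_comm] using this
    have hu' := hu
    rw [← hadj, Submodule.mem_adjoint_iff] at hu'
    have h := hu' _ _ hv
    simp only [inner_neg_left, inner_smul_left, inner_smul_right, RCLike.conj_ofReal,
      inner_self_eq_norm_sq_to_K] at h
    have h' : σ * (‖u‖ ^ 2 + ‖v‖ ^ 2) = 0 := by
      have h2 : ((σ * (‖u‖ ^ 2 + ‖v‖ ^ 2) : ℝ) : 𝕜) = 0 := by
        push_cast; linear_combination -h
      exact_mod_cast h2
    have h3 := (mul_eq_zero.1 h').resolve_left hσ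
    have hu0 : u = 0 := by
      have : ‖u‖ ^ 2 = 0 := by nlinarith [sq_nonneg ‖u‖, sq_nonneg ‖v‖]
      simpa using this
    have hv0 : v = 0 := by
      have : ‖v‖ ^ 2 = 0 := by nlinarith [sq_nonneg ‖u‖, sq_nonneg ‖v‖]
      simpa using this
    rw [hu0, hv0]; rfl
  refine Dense.mono ?_ (show Dense (X := Cplx 𝕜 H) _ from hR)
  rintro _ ⟨x₁, y₁, x₂, y₂, h₁, h₂, rfl⟩
  refine ⟨Cplx.mk x₁ x₂, Cplx.mk y₁ y₂, ⟨h₁, h₂⟩, Cplx.ext' ?_ ?_⟩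
  · simp only [_root_.map_sub, Cplx.re_smul, Cplx.re_mk, Cplx.im_mk]
    simp
    rfl
  · simp only [_root_.map_sub, Cplx.im_smul, Cplx.re_mk, Cplx.im_mk]
    simp
    rfl

/-- A densely defined symmetric operator `T` such that the complexification of `T - i` has dense
range is essentially selfadjoint. Since the complexification commutes with conjugation, the range of
`T + i` needs no separate hypothesis. -/
lemma isEssSelfAdjointOp_of_dense [CompleteSpace H] {T : H →ₗ.[𝕜] H}
    (hd : Dense (T.domain : Set H)) (hs : IsSymmRel T.graph)
    (h : Dense {v : Cplx 𝕜 H | ∃ x y, (x, y) ∈ cplxGraph T.graph ∧ y - Complex.I • x = v}) :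
    T.IsEssSelfAdjointOp := by
  have hle : T.graph ≤ T.graph.adjoint := by
    rintro ⟨x, y⟩ hxy
    rw [Submodule.mem_adjoint_iff]
    intro a b hab
    rw [hs _ _ _ _ hab hxy, sub_self]
  have hcl : IsClosed (T.graph.adjoint : Set (H × H)) := by
    rw [← LinearPMap.adjoint_graph_eq_graph_adjoint hd]
    exact LinearPMap.adjoint_isClosed hd
  have hc : T.IsClosable := by
    refine (LinearPMap.adjoint_isClosed hd).isClosable.leIsClosable (LinearPMap.le_of_le_graph ?_)
    rwa [LinearPMap.adjoint_graph_eq_graph_adjoint hd]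
  have hdc : Dense (T.closure.domain : Set H) := hd.mono T.le_closure.1
  refine ⟨hc, hdc, LinearPMap.eq_of_eq_graph ?_⟩
  rw [LinearPMap.adjoint_graph_eq_graph_adjoint hdc, ← hc.graph_closure_eq_closure_graph]
  apply le_antisymm
  · rintro ⟨u, v⟩ huv
    have huv' : (u, v) ∈ T.graph.adjoint := by
      rw [Submodule.mem_adjoint_iff] at huv ⊢
      exact fun a b hab => huv a b (Submodule.le_topologicalClosure _ hab)
    refine Metric.mem_closure_iff.2 fun ε hε => ?_
    -- `u` belongs to `dom T*` and `(T* - i) u = v - iu`; approximate this vector in the range of `T - i`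
    obtain ⟨q, ⟨x, y, hxy, rfl⟩, hlt⟩ := h.exists_dist_lt (Cplx.mk v (-u))
      (show (0 : ℝ) < ε / 3 by positivity)
    obtain ⟨h₁, h₂⟩ := mem_cplxGraph.1 hxy
    rw [dist_comm, dist_eq_norm] at hlt
    set d := y - Complex.I • x - Cplx.mk v (-u) with hdef
    have hre : ‖Cplx.re d‖ ≤ ‖d‖ := by
      refine le_of_sq_le_sq ?_ (norm_nonneg _)
      rw [Cplx.norm_sq d]; nlinarith [sq_nonneg ‖Cplx.im d‖]
    have him : ‖Cplx.im d‖ ≤ ‖d‖ := by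
      refine le_of_sq_le_sq ?_ (norm_nonneg _)
      rw [Cplx.norm_sq d]; nlinarith [sq_nonneg ‖Cplx.re d‖]
    have er : Cplx.re d = Cplx.re y + Cplx.im x - v := by
      simp [hdef, Cplx.re_smul]
    have ei : Cplx.im d = Cplx.im y - Cplx.re x + u := by
      simp [hdef, Cplx.im_smul]
    set e₁ := Cplx.re d
    set e₂ := Cplx.im d
    set x₁ := Cplx.re x
    set x₂ := Cplx.im x
    set y₁ := Cplx.re y
    set y₂ := Cplx.im y
    set s := u - x₁ with hs'
    have ht : v - y₁ = x₂ - e₁ := by rw [er]; abel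
    have hy₂ : y₂ = e₂ - s := by rw [ei, hs']; abel
    have hst : (s, x₂ - e₁) ∈ T.graph.adjoint := by
      rw [← ht]
      exact T.graph.adjoint.sub_mem huv' (hle h₁)
    have hpair : inner 𝕜 y₂ s - inner 𝕜 x₂ (x₂ - e₁) = 0 :=
      (Submodule.mem_adjoint_iff _ _).1 hst _ _ h₂
    rw [hy₂, inner_sub_left e₂ s s, inner_sub_right x₂ x₂ e₁, inner_self_eq_norm_sq_to_K,
      inner_self_eq_norm_sq_to_K] at hpair
    have hsum : ‖s‖ ^ 2 + ‖x₂‖ ^ 2 ≤ ‖e₂‖ * ‖s‖ + ‖x₂‖ * ‖e₁‖ := by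
      have e : ((‖s‖ ^ 2 + ‖x₂‖ ^ 2 : ℝ) : 𝕜) = inner 𝕜 e₂ s + inner 𝕜 x₂ e₁ := by
        push_cast; linear_combination -hpair
      calc ‖s‖ ^ 2 + ‖x₂‖ ^ 2 = ‖((‖s‖ ^ 2 + ‖x₂‖ ^ 2 : ℝ) : 𝕜)‖ := by
            rw [RCLike.norm_ofReal, abs_of_nonneg (by positivity)]
        _ ≤ _ := by
            rw [e]
            exact (norm_add_le _ _).trans
              (add_le_add (norm_inner_le_norm _ _) (norm_inner_le_norm _ _))
    have hδ : ‖s‖ + ‖x₂‖ ≤ 2 * ‖d‖ := by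
      have h1 : ‖e₂‖ * ‖s‖ ≤ ‖d‖ * ‖s‖ := by gcongr
      have h2 : ‖x₂‖ * ‖e₁‖ ≤ ‖x₂‖ * ‖d‖ := by gcongr
      by_contra! hcon
      have hpos : 0 < ‖s‖ + ‖x₂‖ := lt_of_le_of_lt (by positivity) hcon
      nlinarith [sq_nonneg (‖s‖ - ‖x₂‖), mul_pos hpos (sub_pos.2 hcon)]
    refine ⟨(x₁, y₁), h₁, ?_⟩
    rw [Prod.dist_eq, dist_eq_norm, dist_eq_norm]
    refine max_lt ?_ ?_
    · have := norm_nonneg x₂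
      linarith
    · change ‖v - y₁‖ < ε
      rw [ht]
      have := norm_sub_le x₂ e₁
      have := norm_nonneg s
      linarith
  · exact fun p hp => mem_adjoint_closure (Submodule.topologicalClosure_minimal _ hle hcl hp)

end Criterion

/-! ### Graphs of powers and sums -/

section Graphs

variable {R E F : Type*} [Ring R] [AddCommGroup E] [Module R E] [AddCommGroup F] [Module R F]

lemma mem_graph_pcomp (A : E →ₗ.[R] E) (B : E →ₗ.[R] E) {x z : E} :
    (x, z) ∈ (A.pcomp B).graph ↔ ∃ y, (x, y) ∈ B.graph ∧ (y, z) ∈ A.graph := by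
  rw [LinearPMap.pcomp, Submodule.toLinearPMap_graph_eq]
  · rfl
  · rintro ⟨x, z⟩ ⟨y, h₁, h₂⟩ (rfl : x = 0)
    exact A.graph_fst_eq_zero_snd h₂ (B.graph_fst_eq_zero_snd h₁ rfl)

lemma IsOrbit.mem_graph_ppow {A : E →ₗ.[R] E} {m : ℕ} {a : ℕ → E} (ha : IsOrbit A.graph m a) :
    ∀ k ≤ m, (a 0, a k) ∈ (A.ppow k).graph
  | 0, _ => by simp [LinearPMap.ppow, LinearPMap.mem_graph_iff]
  | k + 1, hk => (mem_graph_pcomp _ _).2 ⟨a k, ha.mem_graph_ppow k (by omega), ha k hk⟩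

/-- With `IsOrbit.mem_graph_ppow` this describes the graph of `Aᵐ` through orbits of `A`, which
keep all the intermediate powers `Aᵏ x` at hand. -/
lemma exists_isOrbit (A : E →ₗ.[R] E) {x : E} :
    ∀ {m : ℕ} {y : E}, (x, y) ∈ (A.ppow m).graph → ∃ a, IsOrbit A.graph m a ∧ a 0 = x ∧ a m = y
  | 0, y, h => by
    have h' : x = y := by simpa [LinearPMap.ppow, LinearPMap.mem_graph_iff] using h
    exact ⟨fun _ => x, fun k hk => absurd hk (by omega), rfl, h'⟩
  | m + 1, y, h => by
    obtain ⟨z, hz, hy⟩ := (mem_graph_pcomp _ _).1 h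
    obtain ⟨a, ha, h0, hm⟩ := exists_isOrbit A hz
    refine ⟨Function.update a (m + 1) y, fun k hk => ?_, ?_, ?_⟩
    · rw [Function.update_of_ne (by omega)]
      rcases (Nat.lt_succ_iff_lt_or_eq.1 hk) with h | rfl
      · rw [Function.update_of_ne (by omega)]
        exact ha k h
      · rw [Function.update_self, hm]
        exact hy
    · rw [Function.update_of_ne (by omega), h0]
    · rw [Function.update_self]

lemma mem_graph_add {f g : E →ₗ.[R] F} {x : E} {y z : F} (hf : (x, y) ∈ f.graph)
    (hg : (x, z) ∈ g.graph) : (x, y + z) ∈ (f + g).graph := by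
  rw [LinearPMap.mem_graph_iff] at hf hg ⊢
  obtain ⟨⟨u, hu⟩, rfl, rfl⟩ := hf
  obtain ⟨⟨v, hv⟩, h, rfl⟩ := hg
  obtain rfl : v = u := h
  exact ⟨⟨v, hu, hv⟩, rfl, rfl⟩

lemma mem_graph_sum {ι : Type*} (s : Finset ι) {f : ι → E →ₗ.[R] F} {x : E} {y : ι → F}
    (h : ∀ k ∈ s, (x, y k) ∈ (f k).graph) : (x, ∑ k ∈ s, y k) ∈ (∑ k ∈ s, f k).graph := by
  induction s using Finset.cons_induction with
  | empty => exact (LinearPMap.mem_graph_iff _).2 ⟨⟨x, trivial⟩, rfl, rfl⟩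
  | cons i s hi ih =>
    rw [Finset.sum_cons, Finset.sum_cons]
    exact mem_graph_add (h i (Finset.mem_cons_self _ _))
      (ih fun k hk => h k (Finset.mem_cons_of_mem hk))

lemma mem_graph_domRestrict {f : E →ₗ.[R] F} {S : Submodule R E} {x : E} {y : F}
    (h : (x, y) ∈ f.graph) (hx : x ∈ S) : (x, y) ∈ (f.domRestrict S).graph := by
  rw [LinearPMap.mem_graph_iff] at h ⊢
  obtain ⟨⟨u, hu⟩, rfl, rfl⟩ := h
  exact ⟨⟨u, hx, hu⟩, rfl, rfl⟩

end Graphs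

/-! ### Polynomials in a symmetric operator -/

section Polynomial

open Polynomial

variable {𝕜 : Type*} {H : Type*} [RCLike 𝕜] [NormedAddCommGroup H] [InnerProductSpace 𝕜 H]

/-- The operator `p(A)` on `dom Aᵐ`. -/
noncomputable abbrev polyOp (A : H →ₗ.[𝕜] H) (m : ℕ) (p : ℝ[X]) : H →ₗ.[𝕜] H :=
  (∑ k ∈ Finset.range (m + 1), ((p.coeff k : 𝕜) • A.ppow k)).domRestrict (A.ppow m).domain

lemma mem_graph_polyOp {A : H →ₗ.[𝕜] H} {m : ℕ} {p : ℝ[X]} {x y : H} :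
    (x, y) ∈ (polyOp A m p).graph ↔ ∃ a, IsOrbit A.graph m a ∧ a 0 = x ∧
      ∑ k ∈ Finset.range (m + 1), (p.coeff k : 𝕜) • a k = y := by
  have key : ∀ a, IsOrbit A.graph m a →
      (a 0, ∑ k ∈ Finset.range (m + 1), (p.coeff k : 𝕜) • a k) ∈ (polyOp A m p).graph := by
    intro a ha
    refine mem_graph_domRestrict (mem_graph_sum _ fun k hk => ?_)
      (LinearPMap.mem_domain_of_mem_graph (ha.mem_graph_ppow m le_rfl))
    rw [LinearPMap.smul_graph]
    exact ⟨_, ha.mem_graph_ppow k (by simpa [Nat.lt_succ_iff] using hk), rfl⟩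
  constructor
  · intro h
    have hx : x ∈ (A.ppow m).domain := (LinearPMap.mem_domain_of_mem_graph h).1
    obtain ⟨z, hz⟩ := LinearPMap.mem_domain_iff.1 hx
    obtain ⟨a, ha, rfl, -⟩ := exists_isOrbit A hz
    exact ⟨a, ha, rfl, LinearPMap.mem_graph_snd_inj _ (key a ha) h rfl⟩
  · rintro ⟨a, ha, rfl, rfl⟩
    exact key a ha

lemma polyOp_domain (A : H →ₗ.[𝕜] H) (m : ℕ) (p : ℝ[X]) :
    (polyOp A m p).domain = (A.ppow m).domain := by
  refine le_antisymm inf_le_left fun x hx => ?_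
  obtain ⟨z, hz⟩ := LinearPMap.mem_domain_iff.1 hx
  obtain ⟨a, ha, rfl, -⟩ := exists_isOrbit A hz
  exact LinearPMap.mem_domain_of_mem_graph (mem_graph_polyOp.2 ⟨a, ha, rfl, rfl⟩)

lemma isSymmRel_graph {A : H →ₗ.[𝕜] H} (hA : A.IsSymmetricOp) : IsSymmRel A.graph := by
  intro x y x' y' h h'
  rw [LinearPMap.mem_graph_iff] at h h'
  obtain ⟨u, rfl, rfl⟩ := h
  obtain ⟨v, rfl, rfl⟩ := h'
  exact hA u v

/-- Powers of a symmetric operator are symmetric; the powers are moved to the other side one at a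
time. -/
lemma IsSymmRel.inner_orbit {g : Submodule 𝕜 (H × H)} (hg : IsSymmRel g) {m : ℕ} {a b : ℕ → H}
    (ha : IsOrbit g m a) (hb : IsOrbit g m b) :
    ∀ j l, j + l ≤ m → inner 𝕜 (a j) (b l) = inner 𝕜 (a 0) (b (l + j))
  | 0, _, _ => rfl
  | j + 1, l, h => by
    rw [hg _ _ _ _ (ha j (by omega)) (hb l (by omega)), hg.inner_orbit ha hb j (l + 1) (by omega),
      add_right_comm l 1 j, add_assoc]

lemma isSymmRel_polyOp {A : H →ₗ.[𝕜] H} (hA : A.IsSymmetricOp) (m : ℕ) (p : ℝ[X]) :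
    IsSymmRel (polyOp A m p).graph := by
  intro x y x' y' h h'
  obtain ⟨a, ha, rfl, rfl⟩ := mem_graph_polyOp.1 h
  obtain ⟨b, hb, rfl, rfl⟩ := mem_graph_polyOp.1 h'
  rw [sum_inner, inner_sum]
  refine Finset.sum_congr rfl fun k hk => ?_
  have hk' : k ≤ m := by simpa [Nat.lt_succ_iff] using hk
  rw [inner_smul_left, inner_smul_right, RCLike.conj_ofReal,
    (isSymmRel_graph hA).inner_orbit ha hb k 0 (by omega), zero_add]

lemma dense_domain_of_dense_closure_domain {T : H →ₗ.[𝕜] H} (hc : T.IsClosable)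
    (hd : Dense (T.closure.domain : Set H)) : Dense (T.domain : Set H) := by
  refine dense_closure.1 (hd.mono fun x hx => ?_)
  obtain ⟨y, hy⟩ := LinearPMap.mem_domain_iff.1 hx
  rw [← hc.graph_closure_eq_closure_graph] at hy
  exact map_mem_closure continuous_fst hy fun q hq => LinearPMap.mem_domain_of_mem_graph hq

lemma seqEval_eq_sum {K : Type*} [NormedAddCommGroup K] [NormedSpace ℂ K] (a : ℕ → K) {f : ℂ[X]}
    {m : ℕ} (hf : f.natDegree ≤ m) :
    seqEval a f = ∑ k ∈ Finset.range (m + 1), f.coeff k • a k := by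
  conv_lhs => rw [f.as_sum_range' (m + 1) (by omega)]
  simp only [map_sum, seqEval_monomial]

lemma seqEval_C {K : Type*} [NormedAddCommGroup K] [NormedSpace ℂ K] (a : ℕ → K) (ζ : ℂ) :
    seqEval a (C ζ) = ζ • a 0 := by
  rw [← monomial_zero_left, seqEval_monomial]

lemma IsOrbit.re {g : Submodule 𝕜 (H × H)} {m : ℕ} {a : ℕ → Cplx 𝕜 H}
    (ha : IsOrbit (cplxGraph g) m a) : IsOrbit g m fun k => Cplx.re (a k) :=
  fun k hk => (mem_cplxGraph.1 (ha k hk)).1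

lemma IsOrbit.im {g : Submodule 𝕜 (H × H)} {m : ℕ} {a : ℕ → Cplx 𝕜 H}
    (ha : IsOrbit (cplxGraph g) m a) : IsOrbit g m fun k => Cplx.im (a k) :=
  fun k hk => (mem_cplxGraph.1 (ha k hk)).2

/-- The complexification of `Aᵐ - iσ` has dense range, expressed through orbits of the
complexification of `A`. -/
lemma dense_polyRange_pow [CompleteSpace H] {A : H →ₗ.[𝕜] H} {m : ℕ}
    (hA : (A.ppow m).IsEssSelfAdjointOp) {σ : ℝ} (hσ : σ ≠ 0) :
    Dense (polyRange (cplxGraph A.graph) m (X ^ m - C (σ * Complex.I))) := by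
  refine (dense_of_isEssSelfAdjointOp hA hσ).mono ?_
  rintro _ ⟨x, y, hxy, rfl⟩
  obtain ⟨h₁, h₂⟩ := mem_cplxGraph.1 hxy
  obtain ⟨a, ha, ha0, ham⟩ := exists_isOrbit A h₁
  obtain ⟨b, hb, hb0, hbm⟩ := exists_isOrbit A h₂
  refine ⟨fun k => Cplx.mk (a k) (b k), fun k hk => ⟨ha k hk, hb k hk⟩, ?_⟩
  rw [_root_.map_sub, seqEval_C, X_pow_eq_monomial, seqEval_monomial, one_smul, ha0, hb0, ham, hbm]
  rfl

/-- The values of `p - i` at the complexification of `A` lie in the range of the complexification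
of `p(A) - i`; real coefficients act on real and imaginary parts separately. -/
lemma polyRange_subset (A : H →ₗ.[𝕜] H) {m : ℕ} {p : ℝ[X]} (hp : p.natDegree ≤ m) :
    polyRange (cplxGraph A.graph) m (p.map (algebraMap ℝ ℂ) - C Complex.I) ⊆
      {v : Cplx 𝕜 H | ∃ x y, (x, y) ∈ cplxGraph (polyOp A m p).graph ∧ y - Complex.I • x = v} := by
  rintro _ ⟨a, ha, rfl⟩
  refine ⟨a 0, seqEval a (p.map (algebraMap ℝ ℂ)), ?_, by rw [_root_.map_sub, seqEval_C]⟩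
  rw [seqEval_eq_sum a (natDegree_map_le.trans hp), mem_cplxGraph, map_sum, map_sum]
  refine ⟨mem_graph_polyOp.2 ⟨_, ha.re, rfl, Finset.sum_congr rfl fun k _ => ?_⟩,
    mem_graph_polyOp.2 ⟨_, ha.im, rfl, Finset.sum_congr rfl fun k _ => ?_⟩⟩
  · rw [coeff_map, Cplx.re_smul]
    simp
  · rw [coeff_map, Cplx.im_smul]
    simp

end Polynomial

/-- **Corollary.** Let `A` be a symmetric operator in a Hilbert space `H` such that `Aᵐ`
(with its natural domain) is essentially selfadjoint for some `m ≥ 1`. If `p` is a real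
polynomial of degree at most `m`, then `p(A)`, restricted to `dom Aᵐ`, is essentially
selfadjoint. -/
theorem polynomial_essentially_selfadjoint {𝕜 H : Type*} [RCLike 𝕜]
    [NormedAddCommGroup H] [InnerProductSpace 𝕜 H] [CompleteSpace H]
    (A : H →ₗ.[𝕜] H) (hsymm : A.IsSymmetricOp) (m : ℕ) (hm : 1 ≤ m)
    (hA : (A.ppow m).IsEssSelfAdjointOp)
    (p : Polynomial ℝ) (hdeg : p.natDegree ≤ m) :
    ((∑ k ∈ Finset.range (m + 1), ((p.coeff k : 𝕜) • A.ppow k)).domRestrict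
      (A.ppow m).domain).IsEssSelfAdjointOp := by
  have hd : Dense ((A.ppow m).domain : Set H) := dense_domain_of_dense_closure_domain hA.1 hA.2.1
  have hdA : Dense {x | ∃ y, (x, y) ∈ A.graph} := by
    refine hd.mono fun x hx => ?_
    obtain ⟨z, hz⟩ := LinearPMap.mem_domain_iff.1 hx
    obtain ⟨a, ha, rfl, -⟩ := exists_isOrbit A hz
    exact ⟨a 1, ha 0 hm⟩
  -- a real polynomial does not take the value `i` on the real line
  have heval : ∀ z : ℂ, z.im = 0 →
      (p.map (algebraMap ℝ ℂ) - Polynomial.C Complex.I).eval z ≠ 0 := by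
    intro z hz h
    have hz' : z = algebraMap ℝ ℂ z.re := Complex.ext rfl (by simp [hz])
    rw [hz', Polynomial.eval_sub, Polynomial.eval_C, Polynomial.eval_map_apply] at h
    simpa using congrArg Complex.im h
  refine isEssSelfAdjointOp_of_dense ?_ (isSymmRel_polyOp hsymm m p)
    ((dense_polyRange_of_no_real_root (isBddBelow_cplxGraph (isSymmRel_graph hsymm))
      (dense_cplxGraph_domain hdA) hm ?_ ?_ ?_ ?_ ?_).mono (polyRange_subset A hdeg))
  · exact (polyOp_domain A m p).symm ▸ hd
  · simpa using dense_polyRange_pow hA one_ne_zero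
  · simpa using dense_polyRange_pow hA (σ := -1) (by norm_num)
  · intro h
    exact heval 0 rfl (by rw [h, Polynomial.eval_zero])
  · refine (Polynomial.natDegree_sub_le _ _).trans ?_
    rw [Polynomial.natDegree_C, max_eq_left (Nat.zero_le _)]
    exact Polynomial.natDegree_map_le.trans hdeg
  · exact fun z hz hz' => heval z hz' (Polynomial.mem_roots'.1 hz).2
end
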